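/- Let K/ℚ be a finite Galois extension. For every ε > 0 there exist constants μ_{K,ε} > 0 and r_{K,ε} > 0 such that for all real r > r_{K,ε}, one has log C_{r,K} > μ_{K,ε} · r^{1/(1+ε)} / log r. -/

import Mathlib

open NumberField

/-- The ideal divisor function `σ_{r,K}(I) = ∑_{J ∣ I} N(J)^{-r}`. -/
noncomputable def sigmaK (K : Type*) [Field K] [NumberField K] (r : ℝ)
    (I : Ideal (𝓞 K)) : ℝ :=
  ∑' J : {J : Ideal (𝓞 K) // J ∣ I}, (Ideal.absNorm (J : Ideal (𝓞 K)) : ℝ) ^ (-r)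


set_option linter.unusedSectionVars false
set_option linter.unusedTactic false

section partA
variable {K : Type*} [Field K] [NumberField K] {ι : Type*} [Fintype ι]

lemma exists_small_elem (b : Module.Basis ι ℤ (𝓞 K)) (I : Ideal (𝓞 K)) (hI : I ≠ ⊥) (m : ℕ)
    (hm : Ideal.absNorm I < (m + 1) ^ Fintype.card ι) :
    ∃ β ∈ I, β ≠ 0 ∧ ∀ i, |b.repr β i| ≤ m := by
  classical
  have hfin : Finite (𝓞 K ⧸ I) := by
    rw [← Ideal.absNorm_ne_zero_iff]
    simpa [Ideal.absNorm_eq_zero_iff] using hI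
  have := Fintype.ofFinite (𝓞 K ⧸ I)
  let f : (ι → Fin (m + 1)) → 𝓞 K := fun a => b.equivFun.symm (fun i => ((a i : ℕ) : ℤ))
  have hcard : Fintype.card (𝓞 K ⧸ I) < Fintype.card (ι → Fin (m + 1)) := by
    rw [Fintype.card_fun, Fintype.card_fin]
    rw [← Nat.card_eq_fintype_card]
    exact hm
  obtain ⟨x, y, hxy, he⟩ := Fintype.exists_ne_map_eq_of_card_lt
    (fun a => Ideal.Quotient.mk I (f a)) hcard
  have hrep : ∀ a i, b.repr (f a) i = ((a i : ℕ) : ℤ) := by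
    intro a i
    simp [f, ← Module.Basis.equivFun_apply, -Module.Basis.equivFun_symm_apply]
  refine ⟨f x - f y, (Ideal.Quotient.eq).1 he, ?_, ?_⟩
  · intro h
    apply hxy
    rw [sub_eq_zero] at h
    funext i
    have := congrArg (fun z => b.repr z i) h
    simp only [hrep] at this
    exact Fin.ext (by exact_mod_cast this)
  · intro i
    rw [map_sub, Finsupp.sub_apply, hrep, hrep]
    have := (x i).2
    have := (y i).2
    rw [abs_le]; constructor <;> omega

/-- structure constants bound -/
lemma exists_mul_bound (b : Module.Basis ι ℤ (𝓞 K)) :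
    ∃ C : ℕ, ∀ (x y : 𝓞 K) (A B : ℤ), (∀ i, |b.repr x i| ≤ A) → (∀ i, |b.repr y i| ≤ B) →
      ∀ k, |b.repr (x * y) k| ≤ C * A * B := by
  classical
  refine ⟨∑ k, ∑ i, ∑ j, (b.repr (b i * b j) k).natAbs, ?_⟩
  intro x y A B hA hB k
  have hA0 : 0 ≤ A := le_trans (abs_nonneg _) (hA k)
  have hB0 : 0 ≤ B := le_trans (abs_nonneg _) (hB k)
  have hx : x * y = ∑ i, ∑ j, (b.repr x i * b.repr y j) • (b i * b j) := by
    conv_lhs => rw [← b.sum_repr x, ← b.sum_repr y]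
    rw [Finset.sum_mul_sum]
    simp only [smul_mul_smul_comm]
  rw [hx]
  simp only [map_sum, map_smul, Finsupp.coe_finsetSum, Finset.sum_apply, Finsupp.smul_apply, smul_eq_mul]
  calc |∑ i, ∑ j, b.repr x i * b.repr y j * b.repr (b i * b j) k|
      ≤ ∑ i, ∑ j, |b.repr x i * b.repr y j * b.repr (b i * b j) k| :=
        (Finset.abs_sum_le_sum_abs _ _).trans
          (Finset.sum_le_sum fun i _ => Finset.abs_sum_le_sum_abs _ _)
    _ ≤ ∑ i, ∑ j, (A * B) * ((b.repr (b i * b j) k).natAbs : ℤ) := by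
        refine Finset.sum_le_sum fun i _ => Finset.sum_le_sum fun j _ => ?_
        rw [abs_mul, abs_mul, Int.natCast_natAbs]
        gcongr
        · exact hA i
        · exact hB j
    _ = (A * B) * ((∑ i, ∑ j, (b.repr (b i * b j) k).natAbs : ℕ) : ℤ) := by
        push_cast
        simp only [Finset.mul_sum]
    _ ≤ (A * B) * ((∑ k, ∑ i, ∑ j, (b.repr (b i * b j) k).natAbs : ℕ) : ℤ) := by
        refine mul_le_mul_of_nonneg_left ?_ (mul_nonneg hA0 hB0)
        exact_mod_cast Finset.single_le_sum (f := fun k => ∑ i, ∑ j, (b.repr (b i * b j) k).natAbs)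
          (fun _ _ => Nat.zero_le _) (Finset.mem_univ k)
    _ = _ := by ring

lemma exists_reduction (b : Module.Basis ι ℤ (𝓞 K)) :
    ∃ C : ℕ, ∀ (I : Ideal (𝓞 K)), I ≠ ⊥ → ∀ m : ℕ, Ideal.absNorm I < (m + 1) ^ Fintype.card ι →
      ∀ z : 𝓞 K, ∃ d : 𝓞 K, Ideal.Quotient.mk I d = Ideal.Quotient.mk I z ∧
        ∀ i, |b.repr d i| ≤ (C * m : ℕ) := by
  obtain ⟨C, hC⟩ := exists_mul_bound b
  refine ⟨C, fun I hI m hm z => ?_⟩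
  obtain ⟨β, hβI, hβ0, hβ⟩ := exists_small_elem b I hI m hm
  set N := Ideal.absNorm (Ideal.span {β}) with hN
  have hN0 : N ≠ 0 := by
    rw [hN, Ne, Ideal.absNorm_eq_zero_iff, Ideal.span_singleton_eq_bot]; exact hβ0
  obtain ⟨β', hβ'⟩ : β ∣ (N : 𝓞 K) := by
    rw [← Ideal.mem_span_singleton]; exact Ideal.absNorm_mem _
  have hNpos : (0 : ℤ) < N := by positivity
  let w := b.repr (z * β')
  let Q : 𝓞 K := b.equivFun.symm (fun i => w i / (N : ℤ))
  let ρ : 𝓞 K := b.equivFun.symm (fun i => w i % (N : ℤ))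
  have hρ : ∀ i, b.repr ρ i = w i % (N : ℤ) := by
    intro i
    simp [ρ, ← Module.Basis.equivFun_apply, -Module.Basis.equivFun_symm_apply]
  have hQ : ∀ i, b.repr Q i = w i / (N : ℤ) := by
    intro i
    simp [Q, ← Module.Basis.equivFun_apply, -Module.Basis.equivFun_symm_apply]
  have hdec : z * β' = (N : ℤ) • Q + ρ := by
    apply b.repr.injective
    ext i
    simp only [map_add, map_smul, Finsupp.add_apply, Finsupp.smul_apply, smul_eq_mul, hρ, hQ]
    exact (Int.mul_ediv_add_emod _ _).symm
  have hd : (N : ℤ) • (z - β * Q) = β * ρ := by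
    have h2 : (N : 𝓞 K) * z = β * (z * β') := by rw [hβ']; ring
    simp only [zsmul_eq_mul, Int.cast_natCast] at hdec ⊢
    rw [mul_sub, h2, hdec]; ring
  refine ⟨z - β * Q, ?_, ?_⟩
  · rw [Ideal.Quotient.eq]
    have : z - β * Q - z = -(β * Q) := by ring
    rw [this]
    exact I.neg_mem (I.mul_mem_right _ hβI)
  · intro i
    have h1 := hC β ρ m N hβ (fun i => by
      rw [hρ, abs_of_nonneg (Int.emod_nonneg _ hNpos.ne')]
      exact (Int.emod_lt_of_pos _ hNpos).le) i
    rw [← hd, map_smul, Finsupp.smul_apply, smul_eq_mul, abs_mul, abs_of_pos hNpos] at h1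
    push_cast
    have : (N : ℤ) * |b.repr (z - β * Q) i| ≤ N * (C * m) := by linarith
    exact le_of_mul_le_mul_left this hNpos

/-- elements of a box lying in `I` -/
noncomputable def boxCount [DecidableEq ι] (b : Module.Basis ι ℤ (𝓞 K)) (u : ι → ℤ) (L : ℕ) (I : Ideal (𝓞 K)) : ℕ :=
  by classical exact
  ((Fintype.piFinset (fun i => Finset.Ico (u i) (u i + L))).filter
    (fun a => b.equivFun.symm a ∈ I)).card

lemma boxCount_bounds [DecidableEq ι] (b : Module.Basis ι ℤ (𝓞 K)) :
    ∃ C : ℕ, ∀ (I : Ideal (𝓞 K)), I ≠ ⊥ → ∀ m : ℕ, Ideal.absNorm I < (m + 1) ^ Fintype.card ι →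
      ∀ (u : ι → ℤ) (L : ℕ),
        boxCount b u L I * Ideal.absNorm I ≤ (L + 2 * (C * m)) ^ Fintype.card ι ∧
        (L - 2 * (C * m)) ^ Fintype.card ι ≤ boxCount b u L I * Ideal.absNorm I := by
  classical
  obtain ⟨C, hC⟩ := exists_reduction b
  refine ⟨C, fun I hI m hm u L => ?_⟩
  have hfin : Finite (𝓞 K ⧸ I) := by
    rw [← Ideal.absNorm_ne_zero_iff]
    simpa [Ideal.absNorm_eq_zero_iff] using hI
  have := Fintype.ofFinite (𝓞 K ⧸ I)
  have hex : ∀ q : 𝓞 K ⧸ I, ∃ d : 𝓞 K, Ideal.Quotient.mk I d = q ∧ ∀ i, |b.repr d i| ≤ (C * m : ℕ) := by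
    intro q
    obtain ⟨z, rfl⟩ := Ideal.Quotient.mk_surjective q
    exact hC I hI m hm z
  choose d hd1 hd2 using hex
  set D := C * m with hD
  have hN : Ideal.absNorm I = (Finset.univ : Finset (𝓞 K ⧸ I)).card := by
    rw [Finset.card_univ, ← Nat.card_eq_fintype_card]; rfl
  have hbox : ∀ (v : ι → ℤ) (M : ℕ), (Fintype.piFinset (fun i => Finset.Ico (v i) (v i + M))).card
      = M ^ Fintype.card ι := by
    intro v M; simp
  rw [boxCount, hN, ← Finset.card_product]
  constructor
  · rw [← hbox (fun i => u i - D)]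
    apply Finset.card_le_card_of_injOn (fun p => p.1 + b.equivFun (d p.2))
    · rintro ⟨a, q⟩ h
      simp only [Finset.coe_product, Set.mem_prod, Finset.mem_coe, Finset.mem_filter, Fintype.mem_piFinset,
        Finset.mem_Ico] at h ⊢
      intro i
      have h1 := h.1.1 i
      have h2 := abs_le.1 (hd2 q i)
      simp only [Pi.add_apply, Module.Basis.equivFun_apply]
      push_cast
      push_cast at h2
      constructor <;> linarith
    · rintro ⟨a, q⟩ h ⟨a', q'⟩ h' he
      simp only [Finset.coe_product, Set.mem_prod, Finset.mem_coe, Finset.mem_filter] at h h' he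
      have e1 : b.equivFun.symm a + d q = b.equivFun.symm a' + d q' := by
        have := congrArg b.equivFun.symm he
        simpa only [map_add, LinearEquiv.symm_apply_apply] using this
      have e2 : q = q' := by
        have := congrArg (Ideal.Quotient.mk I) e1
        rwa [map_add, map_add, Ideal.Quotient.eq_zero_iff_mem.2 h.1.2,
          Ideal.Quotient.eq_zero_iff_mem.2 h'.1.2, zero_add, zero_add, hd1, hd1] at this
      subst e2
      simp at he
      simp [he]
  · rw [← hbox (fun i => u i + D)]
    apply Finset.card_le_card_of_injOn (fun a => 
      (a - b.equivFun (d (Ideal.Quotient.mk I (b.equivFun.symm a))),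
        Ideal.Quotient.mk I (b.equivFun.symm a)))
    · intro a h
      simp only [Finset.coe_product, Set.mem_prod, Finset.mem_coe, Finset.mem_filter, Fintype.mem_piFinset,
        Finset.mem_Ico, Finset.mem_univ, and_true] at h ⊢
      refine ⟨fun i => ?_, ?_⟩
      · have h1 := h i
        have h2 := abs_le.1 (hd2 (Ideal.Quotient.mk I (b.equivFun.symm a)) i)
        simp only [Pi.sub_apply, Module.Basis.equivFun_apply]
        push_cast at h2
        generalize b.repr (d (Ideal.Quotient.mk I (b.equivFun.symm a))) i = t at *
        constructor <;> omega
      · rw [map_sub, LinearEquiv.symm_apply_apply, ← Ideal.Quotient.eq, hd1]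
    · intro a h a' h' he
      simp only [Prod.mk.injEq] at he
      have h1 := he.1
      rw [he.2] at h1
      simpa using h1


lemma pow_sub_pow_le_mul_aux (a b : ℝ) (hb : 0 ≤ b) (hab : b ≤ a) (k : ℕ) :
    a ^ (k + 1) - b ^ (k + 1) ≤ (k + 1) * (a - b) * a ^ k := by
  induction k with
  | zero => simp
  | succ k ih =>
    have ha : 0 ≤ a := hb.trans hab
    have h1 : b ^ (k + 1) ≤ a ^ (k + 1) := pow_le_pow_left₀ hb hab _
    have h2 : a ^ (k + 1 + 1) - b ^ (k + 1 + 1)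
        = a * (a ^ (k + 1) - b ^ (k + 1)) + (a - b) * b ^ (k + 1) := by ring
    have h3 := mul_le_mul_of_nonneg_left ih ha
    have h4 := mul_le_mul_of_nonneg_left h1 (sub_nonneg.2 hab)
    have h5 : a * ((k + 1) * (a - b) * a ^ k) = (k + 1) * (a - b) * a ^ (k + 1) := by ring
    push_cast
    rw [h2]
    rw [h5] at h3
    linarith

lemma boxCount_real [DecidableEq ι] [Nonempty ι] (b : Module.Basis ι ℤ (𝓞 K)) (C₁ : ℝ) (hC₁ : 1 ≤ C₁) :
    ∃ C : ℝ, 0 < C ∧ ∀ (I : Ideal (𝓞 K)), I ≠ ⊥ → ∀ (u : ι → ℤ) (L : ℕ), 1 ≤ L →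
      (Ideal.absNorm I : ℝ) ≤ C₁ * (L : ℝ) ^ Fintype.card ι →
      |(boxCount b u L I : ℝ) - (L : ℝ) ^ Fintype.card ι / Ideal.absNorm I| ≤
        C * (L : ℝ) ^ (Fintype.card ι - 1) * 
          ((Ideal.absNorm I : ℝ) ^ (1 / (Fintype.card ι : ℝ)) / Ideal.absNorm I) := by
  obtain ⟨C, hC⟩ := boxCount_bounds b
  set n := Fintype.card ι with hn
  have hnpos : 0 < n := Fintype.card_pos
  obtain ⟨k, hk⟩ : ∃ k, n = k + 1 := ⟨n - 1, by omega⟩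
  have hk' : n - 1 = k := by omega
  refine ⟨n * (2 * C) * (1 + 2 * C * C₁) ^ (n - 1) + 1, by positivity, fun I hI u L hL hNL => ?_⟩
  have hN0 : Ideal.absNorm I ≠ 0 := by simpa [Ideal.absNorm_eq_zero_iff] using hI
  have hNpos : (0 : ℝ) < Ideal.absNorm I := by positivity
  set N : ℝ := (Ideal.absNorm I : ℝ) with hN
  set R : ℝ := N ^ (1 / (n : ℝ)) with hR
  have hR0 : 0 ≤ R := by positivity
  have hRn : R ^ n = N := by
    rw [hR, one_div, Real.rpow_inv_natCast_pow hNpos.le hnpos.ne']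
  have hLpos : (0 : ℝ) < L := by positivity
  have hRL : R ≤ C₁ * L := by
    have : R ^ n ≤ (C₁ * L) ^ n := by
      rw [hRn, mul_pow]
      refine hNL.trans ?_
      gcongr
      exact le_self_pow₀ hC₁ hnpos.ne'
    exact le_of_pow_le_pow_left₀ hnpos.ne' (by positivity) this
  have hm : Ideal.absNorm I < (⌊R⌋₊ + 1) ^ n := by
    have h1 : R < ⌊R⌋₊ + 1 := Nat.lt_floor_add_one R
    have h2 : R ^ n < (⌊R⌋₊ + 1) ^ n := pow_lt_pow_left₀ h1 hR0 hnpos.ne'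
    rw [hRn, hN] at h2
    exact_mod_cast h2
  obtain ⟨hup, hlo⟩ := hC I hI ⌊R⌋₊ hm u L
  set c := boxCount b u L I
  have hfl : (⌊R⌋₊ : ℝ) ≤ R := Nat.floor_le hR0
  -- upper
  have hup' : (c : ℝ) * N ≤ (L + 2 * C * R) ^ n := by
    have : (c : ℝ) * N ≤ (L + 2 * (C * (⌊R⌋₊ : ℝ))) ^ n := by rw [hN]; exact_mod_cast hup
    refine this.trans ?_
    rw [mul_assoc 2 (C : ℝ) R]
    gcongr
  have hup2 : (L + 2 * C * R) ^ n ≤ (L : ℝ) ^ n + n * (2 * C) * (1 + 2 * C * C₁) ^ (n - 1) * (L : ℝ) ^ (n - 1) * R := by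
    have hb : (L + 2 * C * R) ≤ (1 + 2 * C * C₁) * L := by
      nlinarith [mul_le_mul_of_nonneg_left hRL (by positivity : (0 : ℝ) ≤ 2 * C)]
    have hge : (L : ℝ) ≤ L + 2 * C * R := by
      have : 0 ≤ 2 * C * R := by positivity
      linarith
    have h1 : (L + 2 * C * R) ^ n - (L : ℝ) ^ n ≤ n * (2 * C * R) * (L + 2 * C * R) ^ (n - 1) := by
      rw [hk', hk]
      have := pow_sub_pow_le_mul_aux (L + 2 * C * R) L hLpos.le hge k
      push_cast
      calc _ ≤ _ := this
        _ = _ := by ring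
    have h2 : (L + 2 * C * R) ^ (n - 1) ≤ (1 + 2 * C * C₁) ^ (n - 1) * (L : ℝ) ^ (n - 1) := by
      rw [← mul_pow]; gcongr
    have h3 := mul_le_mul_of_nonneg_left h2 (by positivity : (0 : ℝ) ≤ n * (2 * C * R))
    linarith
  have hlo' : (L : ℝ) ^ n - n * (2 * C) * (L : ℝ) ^ (n - 1) * R ≤ c * N := by
    by_cases hcase : 2 * (C * ⌊R⌋₊) ≤ L
    · have h0 : (((L - 2 * (C * ⌊R⌋₊) : ℕ) : ℝ)) ^ n ≤ c * N := by rw [hN]; exact_mod_cast hlo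
      rw [Nat.cast_sub hcase] at h0
      have hge : (L : ℝ) - (2 * (C * ⌊R⌋₊) : ℕ) ≤ L := by
        have : (0 : ℝ) ≤ (2 * (C * ⌊R⌋₊) : ℕ) := by positivity
        linarith
      have hge0 : (0 : ℝ) ≤ (L : ℝ) - (2 * (C * ⌊R⌋₊) : ℕ) := by
        have : ((2 * (C * ⌊R⌋₊) : ℕ) : ℝ) ≤ L := by exact_mod_cast hcase
        linarith
      have h1 : (L : ℝ) ^ n - ((L : ℝ) - (2 * (C * ⌊R⌋₊) : ℕ)) ^ n ≤ n * (2 * (C * ⌊R⌋₊) : ℕ) * (L : ℝ) ^ (n - 1) := by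
        rw [hk', hk]
        have := pow_sub_pow_le_mul_aux (L : ℝ) ((L : ℝ) - (2 * (C * ⌊R⌋₊) : ℕ)) hge0 hge k
        calc _ ≤ _ := this
          _ = _ := by push_cast; ring
      have h2 : n * (2 * (C * ⌊R⌋₊) : ℕ) * (L : ℝ) ^ (n - 1) ≤ n * (2 * C) * (L : ℝ) ^ (n - 1) * R := by
        push_cast
        calc (n : ℝ) * (2 * (C * ⌊R⌋₊)) * (L : ℝ) ^ (n - 1) = n * (2 * C) * (L : ℝ) ^ (n - 1) * ⌊R⌋₊ := by ring
          _ ≤ _ := by gcongr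
      linarith
    · have h1 : (L : ℝ) ≤ 2 * C * R := by
        have : (L : ℝ) ≤ 2 * (C * ⌊R⌋₊) := by exact_mod_cast (not_le.1 hcase).le
        refine this.trans ?_
        nlinarith [(Nat.cast_nonneg C : (0 : ℝ) ≤ C)]
      have h2 : (L : ℝ) ^ n ≤ n * (2 * C) * (L : ℝ) ^ (n - 1) * R := by
        have : (L : ℝ) ^ n = (L : ℝ) ^ (n - 1) * L := by rw [hk]; simp [pow_succ]
        rw [this]
        have hn1 : (1 : ℝ) ≤ n := by exact_mod_cast hnpos
        calc (L : ℝ) ^ (n - 1) * L ≤ (L : ℝ) ^ (n - 1) * (2 * C * R) := by gcongr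
          _ ≤ n * ((L : ℝ) ^ (n - 1) * (2 * C * R)) := le_mul_of_one_le_left (by positivity) hn1
          _ = _ := by ring
      have : 0 ≤ (c : ℝ) * N := by positivity
      linarith
  have hone : (1 : ℝ) ≤ (1 + 2 * C * C₁) ^ (n - 1) := one_le_pow₀ (by
    have : 0 ≤ 2 * (C : ℝ) * C₁ := by positivity
    linarith)
  have hx : 0 ≤ n * (2 * (C : ℝ)) * (L : ℝ) ^ (n - 1) * R := by positivity
  have hy : 0 ≤ (L : ℝ) ^ (n - 1) * R := by positivity
  have e1 : (c : ℝ) - (L : ℝ) ^ n / N = (c * N - (L : ℝ) ^ n) / N := by field_simp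
  rw [e1, abs_div, abs_of_pos hNpos, ← mul_div_assoc]
  gcongr
  rw [abs_le]
  constructor
  · nlinarith [mul_le_mul_of_nonneg_left hone hx]
  · nlinarith

end partA


section partB
variable {K : Type*} [Field K] [NumberField K] {ι : Type*} [Fintype ι]

lemma card_basis_eq (b : Module.Basis ι ℤ (𝓞 K)) : Fintype.card ι = Module.finrank ℚ K := by
  rw [← RingOfIntegers.rank K, Module.finrank_eq_card_basis b]

lemma exists_box [DecidableEq ι] (b : Module.Basis ι ℤ (𝓞 K)) :
    ∃ C₁ : ℕ, 1 ≤ C₁ ∧ ∀ L : ℕ, 1 ≤ L → ∃ u : ι → ℤ,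
      ∀ a ∈ Fintype.piFinset (fun i => Finset.Ico (u i) (u i + L)),
        L ^ Fintype.card ι ≤ Ideal.absNorm (Ideal.span {b.equivFun.symm a}) ∧
        Ideal.absNorm (Ideal.span {b.equivFun.symm a}) ≤ C₁ * L ^ Fintype.card ι := by
  classical
  set S : ℝ := ∑ σ : K →ₐ[ℚ] ℂ, ∑ i, ‖σ (b i)‖ with hS
  have hS0 : 0 ≤ S := Finset.sum_nonneg fun _ _ => Finset.sum_nonneg fun _ _ => norm_nonneg _
  set M : ℕ := ⌈S⌉₊ + 1 with hM
  have hMS : S + 1 ≤ M := by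
    rw [hM]; push_cast; linarith [Nat.le_ceil S]
  refine ⟨(2 * M) ^ Fintype.card ι, Nat.one_le_pow _ _ (by omega), fun L hL => ?_⟩
  refine ⟨fun i => M * L * b.repr 1 i, fun a ha => ?_⟩
  rw [Fintype.mem_piFinset] at ha
  simp only [Finset.mem_Ico] at ha
  set α : 𝓞 K := b.equivFun.symm a with hα
  set δ : ι → ℤ := fun i => a i - M * L * b.repr 1 i with hδ
  have hδ0 : ∀ i, 0 ≤ δ i ∧ δ i ≤ L := fun i => by
    have := ha i; simp only [hδ]; constructor <;> linarith
  have hdec : α = (M * L : ℕ) + ∑ i, δ i • b i := by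
    have h1 : ((M * L : ℕ) : 𝓞 K) = ∑ i, ((M * L : ℤ) * b.repr 1 i) • b i := by
      have : (1 : 𝓞 K) = ∑ i, b.repr 1 i • b i := (b.sum_repr 1).symm
      calc ((M * L : ℕ) : 𝓞 K) = (M * L : ℤ) • (1 : 𝓞 K) := by simp
        _ = (M * L : ℤ) • ∑ i, b.repr 1 i • b i := by rw [← this]
        _ = _ := by rw [Finset.smul_sum]; simp only [smul_smul]
    rw [h1, ← Finset.sum_add_distrib, hα, Module.Basis.equivFun_symm_apply]
    refine Finset.sum_congr rfl fun i _ => ?_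
    rw [← add_smul]; congr 1; simp only [hδ]; ring
  have hσ : ∀ σ : K →ₐ[ℚ] ℂ, (L : ℝ) ≤ ‖σ (α : K)‖ ∧ ‖σ (α : K)‖ ≤ (2 * M) * L := by
    intro σ
    have e : σ (α : K) = (M * L : ℕ) + ∑ i, (δ i : ℂ) * σ (b i : K) := by
      rw [hdec]
      simp [map_sum]
    have hb : ‖∑ i, (δ i : ℂ) * σ (b i : K)‖ ≤ L * S := by
      calc ‖∑ i, (δ i : ℂ) * σ (b i : K)‖ ≤ ∑ i, ‖(δ i : ℂ) * σ (b i : K)‖ := norm_sum_le _ _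
        _ ≤ ∑ i, L * ‖σ (b i : K)‖ := by
          refine Finset.sum_le_sum fun i _ => ?_
          rw [norm_mul]
          gcongr
          rw [Complex.norm_intCast]
          have := hδ0 i
          have h2 : |(δ i : ℝ)| = δ i := abs_of_nonneg (by exact_mod_cast this.1)
          rw [h2]; exact_mod_cast this.2
        _ = L * ∑ i, ‖σ (b i : K)‖ := by rw [Finset.mul_sum]
        _ ≤ L * S := by
          gcongr
          exact Finset.single_le_sum (f := fun σ : K →ₐ[ℚ] ℂ => ∑ i, ‖σ (b i : K)‖)
            (fun _ _ => Finset.sum_nonneg fun _ _ => norm_nonneg _) (Finset.mem_univ σ)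
    have hn : ‖((M * L : ℕ) : ℂ)‖ = M * L := by rw [Complex.norm_natCast]; push_cast; ring
    have hL0 : (0 : ℝ) ≤ L := by positivity
    constructor
    · rw [e]
      have := norm_sub_le_norm_add ((M * L : ℕ) : ℂ) (∑ i, (δ i : ℂ) * σ (b i : K))
      rw [hn] at this
      nlinarith
    · rw [e]
      have := norm_add_le ((M * L : ℕ) : ℂ) (∑ i, (δ i : ℂ) * σ (b i : K))
      rw [hn] at this
      nlinarith
  have hnorm : (Ideal.absNorm (Ideal.span {α}) : ℝ) = ∏ σ : K →ₐ[ℚ] ℂ, ‖σ (α : K)‖ := by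
    rw [Ideal.absNorm_span_singleton, ← norm_prod, ← Algebra.norm_eq_prod_embeddings ℚ ℂ (α : K),
      ← Algebra.coe_norm_int]
    simp [Nat.cast_natAbs]
  have hcard : (Finset.univ : Finset (K →ₐ[ℚ] ℂ)).card = Fintype.card ι := by
    rw [card_basis_eq b, Finset.card_univ, AlgHom.card]
  constructor
  · have : (L : ℝ) ^ Fintype.card ι ≤ Ideal.absNorm (Ideal.span {α}) := by
      rw [hnorm, ← hcard, ← Finset.prod_const]
      exact Finset.prod_le_prod (fun _ _ => by positivity) (fun σ _ => (hσ σ).1)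
    exact_mod_cast this
  · have : (Ideal.absNorm (Ideal.span {α}) : ℝ) ≤ (2 * M) ^ Fintype.card ι * (L : ℝ) ^ Fintype.card ι := by
      rw [hnorm, ← hcard, ← mul_pow, ← Finset.prod_const]
      exact Finset.prod_le_prod (fun _ _ => norm_nonneg _) (fun σ _ => (hσ σ).2)
    exact_mod_cast this

variable (K) in
/-- prime ideals of norm at most y -/
noncomputable def primeIdealsLE (y : ℕ) : Finset (Ideal (𝓞 K)) :=
  ((Ideal.finite_setOfPred_absNorm_le (S := 𝓞 K) y).subset
    (t := {P : Ideal (𝓞 K) | Prime P ∧ Ideal.absNorm P ≤ y}) (fun _ h => h.2)).toFinset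

lemma mem_primeIdealsLE {y : ℕ} {P : Ideal (𝓞 K)} :
    P ∈ primeIdealsLE K y ↔ Prime P ∧ Ideal.absNorm P ≤ y := by
  simp [primeIdealsLE]

lemma two_le_absNorm_of_prime {P : Ideal (𝓞 K)} (hP : Prime P) : 2 ≤ Ideal.absNorm P := by
  have h0 : Ideal.absNorm P ≠ 0 := by
    rw [Ne, Ideal.absNorm_eq_zero_iff]; exact hP.ne_zero
  have h1 : Ideal.absNorm P ≠ 1 := by
    rw [Ne, Ideal.absNorm_eq_one_iff, ← Ideal.one_eq_top]; exact hP.ne_one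
  omega

lemma log_absNorm_eq (y : ℕ) (J : Ideal (𝓞 K)) (hJ : J ≠ 0) (hy : Ideal.absNorm J ≤ y) :
    Real.log (Ideal.absNorm J) = ∑ q ∈ primeIdealsLE K y ×ˢ Finset.Icc 1 y,
      (by classical exact if q.1 ^ q.2 ∣ J then Real.log (Ideal.absNorm q.1) else 0) := by
  classical
  open UniqueFactorizationMonoid in
  have hN0 : Ideal.absNorm J ≠ 0 := by rwa [Ne, Ideal.absNorm_eq_zero_iff]
  have hdvd : ∀ P : Ideal (𝓞 K), Prime P → ∀ k, P ^ k ∣ J ↔ k ≤ (normalizedFactors J).count P := by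
    intro P hP k
    rw [dvd_iff_normalizedFactors_le_normalizedFactors (pow_ne_zero _ hP.ne_zero) hJ,
      hP.irreducible.normalizedFactors_pow, Multiset.le_count_iff_replicate_le, normalize_eq]
  have hcount : ∀ P : Ideal (𝓞 K), Prime P → (normalizedFactors J).count P ≤ y := by
    intro P hP
    have h1 := (hdvd P hP _).2 le_rfl
    have h2 := Nat.le_of_dvd (Nat.pos_of_ne_zero hN0) (map_dvd Ideal.absNorm h1)
    rw [map_pow] at h2
    have h3 := Nat.pow_le_pow_left (two_le_absNorm_of_prime hP) ((normalizedFactors J).count P)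
    have h4 : (normalizedFactors J).count P < 2 ^ (normalizedFactors J).count P := Nat.lt_two_pow_self
    omega
  have hlog : Real.log (Ideal.absNorm J) = ∑ P ∈ (normalizedFactors J).toFinset,
      ((normalizedFactors J).count P : ℝ) * Real.log (Ideal.absNorm P) := by
    have h1 : J = ∏ P ∈ (normalizedFactors J).toFinset, P ^ (normalizedFactors J).count P := by
      rw [← Finset.prod_multiset_count]
      exact (Ideal.prod_normalizedFactors_eq_self hJ).symm
    conv_lhs => rw [h1]
    rw [map_prod, Nat.cast_prod, Real.log_prod]
    · refine Finset.sum_congr rfl fun P _ => ?_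
      rw [map_pow, Nat.cast_pow, Real.log_pow]
    · intro P hP
      have := two_le_absNorm_of_prime (prime_of_normalized_factor P (Multiset.mem_toFinset.1 hP))
      rw [map_pow, Nat.cast_pow]
      positivity
  rw [hlog, Finset.sum_product]
  have hsub : (normalizedFactors J).toFinset ⊆ primeIdealsLE K y := by
    intro P hP
    have hP := Multiset.mem_toFinset.1 hP
    rw [mem_primeIdealsLE]
    refine ⟨prime_of_normalized_factor P hP, le_trans ?_ hy⟩
    exact Nat.le_of_dvd (Nat.pos_of_ne_zero hN0) (map_dvd Ideal.absNorm (dvd_of_mem_normalizedFactors hP))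
  rw [Finset.sum_subset hsub]
  · refine Finset.sum_congr rfl fun P hP => ?_
    have hP := (mem_primeIdealsLE.1 hP).1
    rw [← Finset.sum_filter]
    simp only
    rw [Finset.sum_const, nsmul_eq_mul]
    congr 2
    have : (Finset.Icc 1 y).filter (fun k => P ^ k ∣ J) = Finset.Icc 1 ((normalizedFactors J).count P) := by
      ext k
      simp only [Finset.mem_filter, Finset.mem_Icc, hdvd P hP]
      have := hcount P hP
      omega
    simp only [this]
    simp
  · intro P _ hP
    rw [Multiset.mem_toFinset] at hP
    rw [Multiset.count_eq_zero_of_notMem hP]; simp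

variable (K) in
/-- weights -/
noncomputable def wK (y m : ℕ) : ℝ :=
  ∑ q ∈ (primeIdealsLE K y ×ˢ Finset.Icc 1 y) with Ideal.absNorm q.1 ^ q.2 = m,
    Real.log (Ideal.absNorm q.1)

lemma wK_nonneg (y m : ℕ) : 0 ≤ wK K y m :=
  Finset.sum_nonneg fun _ _ => Real.log_natCast_nonneg _

lemma wK_le (y m : ℕ) : wK K y m ≤ Module.finrank ℚ K * ArithmeticFunction.vonMangoldt m := by
  classical
  rw [wK]
  set F := (primeIdealsLE K y ×ˢ Finset.Icc 1 y).filter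
    (fun q => Ideal.absNorm q.1 ^ q.2 = m) with hF
  have hmem : ∀ q ∈ F, Prime q.1 ∧ 1 ≤ q.2 ∧ Ideal.absNorm q.1 ^ q.2 = m := by
    intro q hq
    rw [hF, Finset.mem_filter, Finset.mem_product, mem_primeIdealsLE, Finset.mem_Icc] at hq
    exact ⟨hq.1.1.1, hq.1.2.1, hq.2⟩
  have hmax : ∀ q ∈ F, ∃ (p n : ℕ), 0 < n ∧ (p : 𝓞 K) ∈ q.1 ∧ p.Prime ∧ q.1.absNorm = p ^ n := by
    intro q hq
    have hp := (hmem q hq).1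
    have : q.1.IsPrime := Ideal.isPrime_of_prime hp
    have : q.1.IsMaximal := this.isMaximal hp.ne_zero
    exact Ideal.exists_prime_and_absNorm_eq_pow q.1
  rcases F.eq_empty_or_nonempty with h0 | ⟨q₀, hq₀⟩
  · rw [h0]; simp only [Finset.sum_empty]
    have : 0 ≤ ArithmeticFunction.vonMangoldt m := ArithmeticFunction.vonMangoldt_nonneg
    positivity
  obtain ⟨p, f, hf, hpq, hp, hN⟩ := hmax q₀ hq₀
  have hm : m = p ^ (f * q₀.2) := by rw [← (hmem q₀ hq₀).2.2, hN, pow_mul]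
  have hΛ : ArithmeticFunction.vonMangoldt m = Real.log p := by
    rw [hm, ArithmeticFunction.vonMangoldt_apply_pow, ArithmeticFunction.vonMangoldt_apply_prime hp]
    have := (hmem q₀ hq₀).2.1
    positivity
  have hdvd : ∀ q ∈ F, q.1 ∣ Ideal.span {(p : 𝓞 K)} := by
    intro q hq
    obtain ⟨p', f', hf', hpq', hp', hN'⟩ := hmax q hq
    have h1 : p' ∣ p ^ (f * q₀.2) := by
      rw [← hm, ← (hmem q hq).2.2, hN', ← pow_mul]
      exact dvd_pow_self _ (by have := (hmem q hq).2.1; positivity)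
    have h2 : p' = p := (Nat.prime_dvd_prime_iff_eq hp' hp).1 (hp'.dvd_of_dvd_pow h1)
    rw [Ideal.dvd_span_singleton, ← h2]; exact hpq'
  have hinj : Set.InjOn Prod.fst (F : Set (Ideal (𝓞 K) × ℕ)) := by
    rintro ⟨P, k⟩ h ⟨P', k'⟩ h' he
    simp only at he
    subst he
    have e1 := (hmem _ h).2.2
    have e2 := (hmem _ h').2.2
    simp only at e1 e2
    have := Nat.pow_right_injective (two_le_absNorm_of_prime (hmem _ h).1) (e1.trans e2.symm)
    simp [this]
  have hprod : ∏ P ∈ F.image Prod.fst, P ∣ Ideal.span {(p : 𝓞 K)} := by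
    apply Finset.prod_primes_dvd
    · intro P hP
      obtain ⟨q, hq, rfl⟩ := Finset.mem_image.1 hP
      exact (hmem q hq).1
    · intro P hP
      obtain ⟨q, hq, rfl⟩ := Finset.mem_image.1 hP
      exact hdvd q hq
  have h3 := map_dvd Ideal.absNorm hprod
  rw [Ideal.absNorm_span_natCast, map_prod, RingOfIntegers.rank K, Finset.prod_image hinj] at h3
  have h4 := Nat.le_of_dvd (pow_pos hp.pos _) h3
  have hne : ∀ q ∈ F, (Ideal.absNorm q.1 : ℝ) ≠ 0 := fun q hq => by
    have := two_le_absNorm_of_prime (hmem q hq).1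
    positivity
  rw [hΛ, ← Real.log_pow, ← Real.log_prod hne]
  apply Real.log_le_log
  · refine Finset.prod_pos fun q hq => ?_
    have := two_le_absNorm_of_prime (hmem q hq).1
    positivity
  · exact_mod_cast h4

lemma exists_of_wK_ne_zero {y m : ℕ} (hm : m.Prime) (h : wK K y m ≠ 0) :
    ∃ P : Ideal (𝓞 K), Prime P ∧ Ideal.absNorm P = m := by
  classical
  obtain ⟨q, hq, -⟩ := Finset.exists_ne_zero_of_sum_ne_zero h
  rw [Finset.mem_filter, Finset.mem_product, mem_primeIdealsLE, Finset.mem_Icc] at hq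
  refine ⟨q.1, hq.1.1.1, ?_⟩
  have h1 : Ideal.absNorm q.1 ∣ m := by
    rw [← hq.2]; exact dvd_pow_self _ (by omega)
  have := two_le_absNorm_of_prime hq.1.1.1
  rcases (Nat.dvd_prime hm).1 h1 with h | h
  · omega
  · exact h

end partB


section partC

lemma cheb_sum (δ : ℝ) (hδ : 0 < δ) : ∃ C : ℝ, 0 < C ∧ ∀ y : ℕ,
    ∑ m ∈ Finset.Ioc 0 y, ArithmeticFunction.vonMangoldt m * ((m : ℝ) ^ δ / m) ≤ C * (y : ℝ) ^ δ := by
  set c : ℝ := Real.log 4 + 4 with hc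
  have hc0 : 0 < c := by
    have : 0 ≤ Real.log 4 := Real.log_nonneg (by norm_num)
    linarith
  have h2 : (2 : ℝ)⁻¹ ^ δ < 1 := Real.rpow_lt_one (by norm_num) (by norm_num) hδ
  refine ⟨2 * c / (1 - (2 : ℝ)⁻¹ ^ δ), div_pos (by linarith) (by linarith), ?_⟩
  set Kc := 2 * c / (1 - (2 : ℝ)⁻¹ ^ δ) with hK
  have hKpos : 0 < Kc := div_pos (by linarith) (by linarith)
  have hKeq : Kc * (2 : ℝ)⁻¹ ^ δ + 2 * c = Kc := by
    have : Kc * (1 - (2 : ℝ)⁻¹ ^ δ) = 2 * c := div_mul_cancel₀ _ (by linarith)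
    linarith
  intro y
  induction y using Nat.strong_induction_on with
  | _ y ih =>
    rcases Nat.eq_zero_or_pos y with rfl | hy
    · simp [Real.zero_rpow hδ.ne']
    have hy' : (0 : ℝ) < y := by exact_mod_cast hy
    have hz : y / 2 < y := Nat.div_lt_self hy (by norm_num)
    have hsplit := Finset.sum_Ioc_consecutive 
      (fun m : ℕ => ArithmeticFunction.vonMangoldt m * ((m : ℝ) ^ δ / m)) (Nat.zero_le (y / 2)) hz.le
    rw [← hsplit]
    have hA := ih (y / 2) hz
    have hA2 : Kc * ((y / 2 : ℕ) : ℝ) ^ δ ≤ Kc * (2 : ℝ)⁻¹ ^ δ * (y : ℝ) ^ δ := by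
      rw [mul_assoc, ← Real.mul_rpow (by norm_num) hy'.le]
      gcongr
      have : ((y / 2 : ℕ) : ℝ) ≤ (y : ℝ) / 2 := Nat.cast_div_le
      linarith
    have hB : ∑ m ∈ Finset.Ioc (y / 2) y, ArithmeticFunction.vonMangoldt m * ((m : ℝ) ^ δ / m)
        ≤ 2 * c * (y : ℝ) ^ δ := by
      calc _ ≤ ∑ m ∈ Finset.Ioc (y / 2) y, ArithmeticFunction.vonMangoldt m * ((y : ℝ) ^ δ / (y / 2)) := by
            refine Finset.sum_le_sum fun m hm => ?_
            rw [Finset.mem_Ioc] at hm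
            have hm2 : (y : ℝ) / 2 ≤ m := by
              have : y ≤ 2 * m := by omega
              have : (y : ℝ) ≤ 2 * m := by exact_mod_cast this
              linarith
            have : 0 ≤ ArithmeticFunction.vonMangoldt m := ArithmeticFunction.vonMangoldt_nonneg
            have : (m : ℝ) ≤ y := by exact_mod_cast hm.2
            gcongr
        _ = (∑ m ∈ Finset.Ioc (y / 2) y, ArithmeticFunction.vonMangoldt m) * ((y : ℝ) ^ δ / (y / 2)) := by
            rw [Finset.sum_mul]
        _ ≤ Chebyshev.psi y * ((y : ℝ) ^ δ / (y / 2)) := by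
            gcongr
            rw [Chebyshev.psi, Nat.floor_natCast]
            apply Finset.sum_le_sum_of_subset_of_nonneg
            · exact Finset.Ioc_subset_Ioc_left (Nat.zero_le _)
            · intros; exact ArithmeticFunction.vonMangoldt_nonneg
        _ ≤ (c * y) * ((y : ℝ) ^ δ / (y / 2)) := by
            gcongr
            exact Chebyshev.psi_le_const_mul_self hy'.le
        _ = 2 * c * (y : ℝ) ^ δ := by field_simp
    calc _ ≤ Kc * (2 : ℝ)⁻¹ ^ δ * (y : ℝ) ^ δ + 2 * c * (y : ℝ) ^ δ := by linarith
      _ = (Kc * (2 : ℝ)⁻¹ ^ δ + 2 * c) * (y : ℝ) ^ δ := by ring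
      _ = Kc * (y : ℝ) ^ δ := by rw [hKeq]

variable {K : Type*} [Field K] [NumberField K]

lemma sum_fiber (y X : ℕ) (h : ℕ → ℝ) :
    ∑ q ∈ (primeIdealsLE K y ×ˢ Finset.Icc 1 y) with Ideal.absNorm q.1 ^ q.2 ≤ X,
      Real.log (Ideal.absNorm q.1) * h (Ideal.absNorm q.1 ^ q.2)
    = ∑ m ∈ Finset.Ioc 0 X, wK K y m * h m := by
  classical
  rw [← Finset.sum_fiberwise_of_maps_to (t := Finset.Ioc 0 X) (g := fun q => Ideal.absNorm q.1 ^ q.2)]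
  · refine Finset.sum_congr rfl fun m hm => ?_
    rw [Finset.mem_Ioc] at hm
    rw [wK, Finset.sum_mul, Finset.filter_filter]
    refine Finset.sum_congr ?_ ?_
    · ext q
      simp only [Finset.mem_filter]
      constructor
      · rintro ⟨a, b, c⟩; exact ⟨a, c⟩
      · rintro ⟨a, c⟩; exact ⟨a, by omega, c⟩
    · intro q hq
      rw [(Finset.mem_filter.1 hq).2]
  · intro q hq
    rw [Finset.mem_filter, Finset.mem_product, mem_primeIdealsLE] at hq
    have := two_le_absNorm_of_prime hq.1.1.1
    rw [Finset.mem_Ioc]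
    exact ⟨by positivity, hq.2⟩

variable (K) in
lemma mertens : ∃ (C : ℝ) (C₁ : ℕ), 0 < C ∧ 1 ≤ C₁ ∧ ∀ L : ℕ, 1 ≤ L → ∀ y : ℕ,
    C₁ * L ^ Module.finrank ℚ K ≤ y →
    |∑ m ∈ Finset.Ioc 0 (C₁ * L ^ Module.finrank ℚ K), wK K y m / m
      - Real.log ((L : ℝ) ^ Module.finrank ℚ K)| ≤ C := by
  classical
  let b := RingOfIntegers.basis K
  have hcard := card_basis_eq b
  set n := Module.finrank ℚ K with hn
  have hnpos : 0 < n := Module.finrank_pos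
  have : Nonempty (Module.Free.ChooseBasisIndex ℤ (𝓞 K)) := by
    rw [← Fintype.card_pos_iff, hcard]; exact hnpos
  obtain ⟨C₁, hC₁, hbox⟩ := exists_box b
  obtain ⟨C, hC, hcount⟩ := boxCount_real b C₁ (by exact_mod_cast hC₁)
  obtain ⟨C', hC', hcheb⟩ := cheb_sum (1 / (n : ℝ)) (by positivity)
  rw [hcard] at hbox hcount
  refine ⟨Real.log C₁ + C * n * C' * (C₁ : ℝ) ^ (1 / (n : ℝ)), C₁, ?_, hC₁, fun L hL y hy => ?_⟩
  · have := Real.log_natCast_nonneg C₁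
    positivity
  obtain ⟨u, hu⟩ := hbox L hL
  set X := C₁ * L ^ n with hX
  set B := Fintype.piFinset (fun i => Finset.Ico (u i) (u i + L)) with hB
  have hBcard : B.card = L ^ n := by rw [hB, ← hcard]; simp
  have hLpos : (0 : ℝ) < L := by positivity
  have hLn : (0 : ℝ) < (L : ℝ) ^ n := by positivity
  set G := ∑ a ∈ B, Real.log (Ideal.absNorm (Ideal.span {b.equivFun.symm a})) with hG
  have hspan0 : ∀ a ∈ B, Ideal.span {b.equivFun.symm a} ≠ 0 := by
    intro a ha h
    have := (hu a ha).1
    rw [h] at this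
    have : 0 < L ^ n := by positivity
    simp at *
    omega
  have hG1 : (L : ℝ) ^ n * Real.log ((L : ℝ) ^ n) ≤ G := by
    have : (L : ℝ) ^ n * Real.log ((L : ℝ) ^ n) = ∑ a ∈ B, Real.log ((L : ℝ) ^ n) := by
      rw [Finset.sum_const, hBcard, nsmul_eq_mul]; push_cast; ring
    rw [this]
    refine Finset.sum_le_sum fun a ha => Real.log_le_log hLn ?_
    exact_mod_cast (hu a ha).1
  have hG2 : G ≤ (L : ℝ) ^ n * (Real.log ((L : ℝ) ^ n) + Real.log C₁) := by
    have : (L : ℝ) ^ n * (Real.log ((L : ℝ) ^ n) + Real.log C₁) = ∑ a ∈ B, (Real.log ((L : ℝ) ^ n) + Real.log C₁) := by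
      rw [Finset.sum_const, hBcard, nsmul_eq_mul]; push_cast; ring
    rw [this]
    refine Finset.sum_le_sum fun a ha => ?_
    rw [add_comm, ← Real.log_mul (by positivity) hLn.ne']
    apply Real.log_le_log
    · have := (hu a ha).1
      have h1 : (L : ℝ) ^ n ≤ Ideal.absNorm (Ideal.span {b.equivFun.symm a}) := by exact_mod_cast this
      linarith
    · exact_mod_cast (hu a ha).2
  -- decomposition
  have hdec : G = ∑ q ∈ primeIdealsLE K y ×ˢ Finset.Icc 1 y,
      Real.log (Ideal.absNorm q.1) * (boxCount b u L (q.1 ^ q.2) : ℝ) := by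
    rw [hG, Finset.sum_congr rfl (fun a ha => log_absNorm_eq y _ (hspan0 a ha) (((hu a ha).2).trans hy)),
      Finset.sum_comm]
    refine Finset.sum_congr rfl fun q _ => ?_
    rw [← Finset.sum_filter, Finset.sum_const, nsmul_eq_mul, mul_comm, boxCount]
    simp only [Ideal.dvd_span_singleton, hB]
  have hdec2 : G = ∑ q ∈ (primeIdealsLE K y ×ˢ Finset.Icc 1 y) with Ideal.absNorm q.1 ^ q.2 ≤ X,
      Real.log (Ideal.absNorm q.1) * (boxCount b u L (q.1 ^ q.2) : ℝ) := by
    rw [hdec, Finset.sum_filter]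
    refine Finset.sum_congr rfl fun q _ => ?_
    split_ifs with h
    · rfl
    · have : boxCount b u L (q.1 ^ q.2) = 0 := by
        rw [boxCount, Finset.card_eq_zero, Finset.filter_eq_empty_iff]
        intro a ha hmem
        apply h
        have h1 : q.1 ^ q.2 ∣ Ideal.span {b.equivFun.symm a} := by
          rw [Ideal.dvd_span_singleton]; exact hmem
        have h2 := map_dvd Ideal.absNorm h1
        rw [map_pow] at h2
        refine (Nat.le_of_dvd ?_ h2).trans (hu a ha).2
        exact lt_of_lt_of_le (by positivity) (hu a ha).1
      rw [this]; simp
  have hmain : |G - (L : ℝ) ^ n * ∑ m ∈ Finset.Ioc 0 X, wK K y m / m|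
      ≤ (L : ℝ) ^ n * (C * n * C' * (C₁ : ℝ) ^ (1 / (n : ℝ))) := by
    have e1 : (L : ℝ) ^ n * ∑ m ∈ Finset.Ioc 0 X, wK K y m / m
        = ∑ q ∈ (primeIdealsLE K y ×ˢ Finset.Icc 1 y) with Ideal.absNorm q.1 ^ q.2 ≤ X,
      Real.log (Ideal.absNorm q.1) * ((L : ℝ) ^ n / ((Ideal.absNorm q.1 ^ q.2 : ℕ) : ℝ)) := by
      rw [sum_fiber y X (fun m => (L : ℝ) ^ n / (m : ℝ)), Finset.mul_sum]
      refine Finset.sum_congr rfl fun m _ => by ring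
    rw [e1, hdec2, ← Finset.sum_sub_distrib]
    calc _ ≤ ∑ q ∈ (primeIdealsLE K y ×ˢ Finset.Icc 1 y) with Ideal.absNorm q.1 ^ q.2 ≤ X,
          Real.log (Ideal.absNorm q.1) * (C * (L : ℝ) ^ (n - 1) * 
          (((Ideal.absNorm q.1 ^ q.2 : ℕ) : ℝ) ^ (1 / (n : ℝ)) / ((Ideal.absNorm q.1 ^ q.2 : ℕ) : ℝ))) := by
          refine (Finset.abs_sum_le_sum_abs _ _).trans (Finset.sum_le_sum fun q hq => ?_)
          rw [Finset.mem_filter, Finset.mem_product, mem_primeIdealsLE] at hq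
          rw [← mul_sub, abs_mul, abs_of_nonneg (Real.log_natCast_nonneg _)]
          refine mul_le_mul_of_nonneg_left ?_ (Real.log_natCast_nonneg _)
          have h0 : q.1 ^ q.2 ≠ ⊥ := pow_ne_zero _ hq.1.1.1.ne_zero
          have h1 : ((Ideal.absNorm (q.1 ^ q.2) : ℕ) : ℝ) ≤ C₁ * (L : ℝ) ^ n := by
            rw [map_pow]; exact_mod_cast hq.2
          have := hcount (q.1 ^ q.2) h0 u L hL h1
          rwa [map_pow] at this
      _ = ∑ m ∈ Finset.Ioc 0 X, wK K y m * (C * (L : ℝ) ^ (n - 1) * ((m : ℝ) ^ (1 / (n : ℝ)) / m)) :=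
          sum_fiber y X (fun m => C * (L : ℝ) ^ (n - 1) * ((m : ℝ) ^ (1 / (n : ℝ)) / m))
      _ ≤ ∑ m ∈ Finset.Ioc 0 X, (n * ArithmeticFunction.vonMangoldt m) * (C * (L : ℝ) ^ (n - 1) * ((m : ℝ) ^ (1 / (n : ℝ)) / m)) := by
          refine Finset.sum_le_sum fun m _ => ?_
          gcongr
          exact wK_le y m
      _ = C * (L : ℝ) ^ (n - 1) * n * ∑ m ∈ Finset.Ioc 0 X, ArithmeticFunction.vonMangoldt m * ((m : ℝ) ^ (1 / (n : ℝ)) / m) := by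
          rw [Finset.mul_sum]
          refine Finset.sum_congr rfl fun m _ => by ring
      _ ≤ C * (L : ℝ) ^ (n - 1) * n * (C' * (X : ℝ) ^ (1 / (n : ℝ))) := by
          gcongr
          exact hcheb X
      _ = _ := by
          have e2 : (X : ℝ) ^ (1 / (n : ℝ)) = (C₁ : ℝ) ^ (1 / (n : ℝ)) * L := by
            rw [hX]; push_cast
            rw [Real.mul_rpow (by positivity) (by positivity), one_div,
              Real.pow_rpow_inv_natCast hLpos.le hnpos.ne']
          have e3 : (L : ℝ) ^ n = (L : ℝ) ^ (n - 1) * L := by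
            rw [← pow_succ]; congr 1; omega
          rw [e2, e3]; ring
  set W := ∑ m ∈ Finset.Ioc 0 X, wK K y m / m with hW
  set E := C * n * C' * (C₁ : ℝ) ^ (1 / (n : ℝ)) with hE
  rw [abs_le] at hmain ⊢
  have hlog0 := Real.log_natCast_nonneg C₁
  constructor
  · have : (L : ℝ) ^ n * (Real.log ((L : ℝ) ^ n)) ≤ (L : ℝ) ^ n * (W + E) := by linarith [hmain.2]
    have := le_of_mul_le_mul_left this hLn
    linarith
  · have : (L : ℝ) ^ n * W ≤ (L : ℝ) ^ n * (Real.log ((L : ℝ) ^ n) + Real.log C₁ + E) := by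
      linarith [hmain.1]
    have := le_of_mul_le_mul_left this hLn
    linarith

end partC


section partD
variable (K : Type*) [Field K] [NumberField K]

/-- rational primes in `(a,b]` that are norms of prime ideals -/
noncomputable def goodPrimes (a b : ℕ) : Finset ℕ := by
  classical exact
  (Finset.Ioc a b).filter (fun p => p.Prime ∧ ∃ P : Ideal (𝓞 K), Prime P ∧ Ideal.absNorm P = p)

lemma mem_goodPrimes {a b p : ℕ} : p ∈ goodPrimes K a b ↔
    (a < p ∧ p ≤ b) ∧ p.Prime ∧ ∃ P : Ideal (𝓞 K), Prime P ∧ Ideal.absNorm P = p := by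
  simp [goodPrimes]

lemma goodPrimes_aux : ∃ (C₁ h X₀ : ℕ), 1 ≤ C₁ ∧ 1 ≤ h ∧ ∀ L : ℕ, 1 ≤ L →
    X₀ ≤ C₁ * L ^ Module.finrank ℚ K →
    ((C₁ * L ^ Module.finrank ℚ K : ℕ) : ℝ) ≤ (goodPrimes K (C₁ * L ^ Module.finrank ℚ K)
      (h * (C₁ * L ^ Module.finrank ℚ K))).card * (Module.finrank ℚ K *
        Real.log ((h * (C₁ * L ^ Module.finrank ℚ K) : ℕ) : ℝ)) := by
  classical
  obtain ⟨C, C₁, hC, hC₁, hmer⟩ := mertens K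
  obtain ⟨C₄, hC₄⟩ := Chebyshev.psi_sub_theta_le_mul_sqrt
  set n := Module.finrank ℚ K with hn
  have hnpos : 0 < n := Module.finrank_pos
  have hn1 : (1 : ℝ) ≤ n := by exact_mod_cast hnpos
  set g : ℕ := ⌈Real.exp (2 * C + 2)⌉₊ with hg
  have hg1 : 1 ≤ g := Nat.one_le_iff_ne_zero.2 (by
    have := Nat.ceil_pos.2 (Real.exp_pos (2 * C + 2)); omega)
  have hglog : 2 * C + 2 ≤ Real.log g := by
    rw [Real.le_log_iff_exp_le (by positivity)]
    exact Nat.le_ceil _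
  set c4 := max C₄ 1 with hc4
  have hc4' : 0 < c4 := lt_of_lt_of_le one_pos (le_max_right _ _)
  refine ⟨C₁, g ^ n, ⌈(n * c4) ^ 2 * (g : ℝ) ^ n⌉₊, hC₁, Nat.one_le_pow _ _ hg1, fun L hL hX₀ => ?_⟩
  set X := C₁ * L ^ n with hX
  have hXpos : 0 < X := by positivity
  have hXpos' : (0 : ℝ) < X := by exact_mod_cast hXpos
  have hX' : C₁ * (g * L) ^ n = g ^ n * X := by rw [mul_pow, hX]; ring
  have h1 := hmer L hL (g ^ n * X) (Nat.le_mul_of_pos_left _ (by positivity))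
  have h2 := hmer (g * L) (Nat.mul_pos hg1 hL) (g ^ n * X) hX'.le
  rw [hX'] at h2
  rw [← hX] at h1
  set X' := g ^ n * X with hX'd
  have hXX' : X ≤ X' := Nat.le_mul_of_pos_left _ (by positivity)
  have hsplit := Finset.sum_Ioc_consecutive (fun m : ℕ => wK K X' m / (m : ℝ)) (Nat.zero_le X) hXX'
  have hlogs : Real.log (((g * L : ℕ) : ℝ) ^ n) - Real.log ((L : ℝ) ^ n) = n * Real.log g := by
    rw [Real.log_pow, Real.log_pow, Nat.cast_mul, Real.log_mul (by positivity) (by positivity)]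
    ring
  have hge : 2 ≤ ∑ m ∈ Finset.Ioc X X', wK K X' m / m := by
    rw [abs_le] at h1 h2
    have : Real.log g ≤ n * Real.log g := le_mul_of_one_le_left (by linarith) hn1
    linarith [h1.2, h2.1]
  have hterm : ∀ m ∈ Finset.Ioc X X', wK K X' m / m ≤
      (if m ∈ goodPrimes K X X' then n * Real.log X' / X else 0) +
      (if ¬ m.Prime then n * ArithmeticFunction.vonMangoldt m / X else 0) := by
    intro m hm
    have hm' := Finset.mem_Ioc.1 hm
    have hmX : (X : ℝ) ≤ m := by exact_mod_cast hm'.1.le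
    have hw := wK_le (K := K) X' m
    have hΛ : 0 ≤ ArithmeticFunction.vonMangoldt m := ArithmeticFunction.vonMangoldt_nonneg
    have hlX' : 0 ≤ Real.log X' := Real.log_natCast_nonneg _
    have hb : wK K X' m / m ≤ n * ArithmeticFunction.vonMangoldt m / X := by
      gcongr
    by_cases hp : m.Prime
    · rw [if_neg (not_not.2 hp), add_zero]
      by_cases hw0 : wK K X' m = 0
      · rw [hw0, zero_div]; split_ifs <;> positivity
      · rw [if_pos ((mem_goodPrimes K).2 ⟨hm', hp, exists_of_wK_ne_zero hp hw0⟩)]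
        refine hb.trans ?_
        gcongr
        rw [ArithmeticFunction.vonMangoldt_apply_prime hp]
        apply Real.log_le_log
        · exact_mod_cast hp.pos
        · exact_mod_cast hm'.2
    · rw [if_pos hp]
      have : (0 : ℝ) ≤ (if m ∈ goodPrimes K X X' then n * Real.log X' / X else 0) := by
        split_ifs <;> positivity
      linarith
  have hsum := hge.trans (Finset.sum_le_sum hterm)
  rw [Finset.sum_add_distrib, ← Finset.sum_filter, ← Finset.sum_filter] at hsum
  have e1 : (Finset.Ioc X X').filter (fun m => m ∈ goodPrimes K X X') = goodPrimes K X X' := by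
    ext m; simp only [Finset.mem_filter, Finset.mem_Ioc, mem_goodPrimes]; tauto
  rw [e1, Finset.sum_const, nsmul_eq_mul] at hsum
  have hX'pos : (0 : ℝ) ≤ X' := by positivity
  have e2 : ∑ m ∈ (Finset.Ioc X X').filter (fun m => ¬ m.Prime), n * ArithmeticFunction.vonMangoldt m / (X : ℝ)
      ≤ 1 := by
    have h3 : ∑ m ∈ (Finset.Ioc X X').filter (fun m => ¬ m.Prime), ArithmeticFunction.vonMangoldt m
        ≤ c4 * Real.sqrt X' := by
      calc _ ≤ ∑ m ∈ (Finset.Ioc 0 X').filter (fun m => ¬ m.Prime), ArithmeticFunction.vonMangoldt m := by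
            apply Finset.sum_le_sum_of_subset_of_nonneg
            · exact Finset.filter_subset_filter _ (Finset.Ioc_subset_Ioc_left (Nat.zero_le _))
            · intros; exact ArithmeticFunction.vonMangoldt_nonneg
        _ = Chebyshev.psi X' - Chebyshev.theta X' := by
            rw [Chebyshev.psi_sub_theta_eq_sum_not_prime, Nat.floor_natCast]
        _ ≤ C₄ * Real.sqrt X' := hC₄ _
        _ ≤ _ := by gcongr; exact le_max_left _ _
    have h4 : n * c4 * Real.sqrt X' ≤ X := by
      have h5 : (n * c4) ^ 2 * (g : ℝ) ^ n ≤ X := (Nat.le_ceil _).trans (by exact_mod_cast hX₀)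
      rw [← Real.sqrt_sq (by positivity : 0 ≤ n * c4), ← Real.sqrt_mul (by positivity)]
      apply Real.sqrt_le_iff.2 ⟨hXpos'.le, ?_⟩
      rw [hX'd]; push_cast
      nlinarith
    rw [← Finset.sum_div, ← Finset.mul_sum, div_le_one hXpos']
    calc _ ≤ n * (c4 * Real.sqrt X') := by gcongr
      _ ≤ X := by linarith
  have h6 : 1 ≤ (goodPrimes K X X').card * (n * Real.log X' / X) := by linarith
  rw [← mul_div_assoc, le_div_iff₀ hXpos', one_mul] at h6
  exact h6

theorem goodPrimes_count : ∃ (H x₀ : ℕ) (c : ℝ), 1 ≤ H ∧ 0 < c ∧ 2 ≤ x₀ ∧ ∀ x : ℕ, x₀ ≤ x →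
    c * (x / Real.log x) ≤ (goodPrimes K x (H * x)).card := by
  classical
  obtain ⟨C₁, h, X₀, hC₁, hh, haux⟩ := goodPrimes_aux K
  set n := Module.finrank ℚ K with hn
  have hnpos : 0 < n := Module.finrank_pos
  set H := h * (C₁ * 2 ^ n) with hH
  have hH1 : 1 ≤ H := Nat.one_le_iff_ne_zero.2 (by positivity)
  refine ⟨H, max (max X₀ H) 2, 1 / (2 * n), hH1, by positivity, le_max_right _ _, fun x hx => ?_⟩
  have hx1 : X₀ ≤ x := le_trans (le_trans (le_max_left _ _) (le_max_left _ _)) hx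
  have hx2 : H ≤ x := le_trans (le_trans (le_max_right _ _) (le_max_left _ _)) hx
  have hx3 : 2 ≤ x := le_trans (le_max_right _ _) hx
  have hex : ∃ L : ℕ, x ≤ L ^ n := ⟨x, Nat.le_self_pow hnpos.ne' x⟩
  set L := Nat.find hex with hL
  have hL1 : x ≤ L ^ n := Nat.find_spec hex
  have hL2 : 2 ≤ L := by
    by_contra hlt
    have : L ^ n ≤ 1 ^ n := Nat.pow_le_pow_left (by omega) n
    rw [one_pow] at this
    omega
  have hL3 : (L - 1) ^ n < x := not_le.1 (Nat.find_min hex (m := L - 1) (by omega))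
  have hL4 : L ^ n ≤ 2 ^ n * x := by
    calc L ^ n ≤ (2 * (L - 1)) ^ n := Nat.pow_le_pow_left (by omega) n
      _ = 2 ^ n * (L - 1) ^ n := mul_pow _ _ _
      _ ≤ _ := Nat.mul_le_mul_left _ hL3.le
  set X := C₁ * L ^ n with hX
  have hxX : x ≤ X := hL1.trans (Nat.le_mul_of_pos_left _ hC₁)
  have hXH : h * X ≤ H * x := by
    rw [hX, hH, mul_assoc, mul_assoc]
    exact Nat.mul_le_mul_left _ (Nat.mul_le_mul_left _ hL4)
  have h1 := haux L (by omega) (hx1.trans hxX)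
  have hcard : (goodPrimes K X (h * X)).card ≤ (goodPrimes K x (H * x)).card := by
    apply Finset.card_le_card
    intro p hp
    rw [mem_goodPrimes] at hp ⊢
    exact ⟨⟨by omega, by omega⟩, hp.2⟩
  have hxpos : (0 : ℝ) < x := by positivity
  have hlogx : 0 < Real.log x := Real.log_pos (by exact_mod_cast hx3)
  have hlog : Real.log ((h * X : ℕ) : ℝ) ≤ 2 * Real.log x := by
    have : Real.log ((h * X : ℕ) : ℝ) ≤ Real.log ((x : ℝ) * x) := by
      apply Real.log_le_log
      · have : 0 < h * X := by positivity
        exact_mod_cast this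
      · exact_mod_cast hXH.trans (Nat.mul_le_mul_right _ hx2)
    rw [Real.log_mul hxpos.ne' hxpos.ne'] at this
    linarith
  have h2 : (x : ℝ) ≤ (goodPrimes K x (H * x)).card * (n * (2 * Real.log x)) := by
    calc (x : ℝ) ≤ X := by exact_mod_cast hxX
      _ ≤ _ := h1
      _ ≤ _ := by gcongr
  rw [one_div, inv_mul_le_iff₀ (by positivity), div_le_iff₀ hlogx]
  linarith

end partD


section partE
variable (K : Type*) [Field K] [NumberField K]

/-- the term `N(J)^{-r}` -/
noncomputable def nf (r : ℝ) (J : Ideal (𝓞 K)) : ℝ := (Ideal.absNorm J : ℝ) ^ (-r)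

theorem nf_nonneg (r : ℝ) (J : Ideal (𝓞 K)) : 0 ≤ nf K r J := by unfold nf; positivity

theorem nf_one (r : ℝ) : nf K r 1 = 1 := by simp [nf]

theorem nf_mul (r : ℝ) (I J : Ideal (𝓞 K)) : nf K r (I * J) = nf K r I * nf K r J := by
  simp only [nf, map_mul, Nat.cast_mul]
  rw [Real.mul_rpow (by positivity) (by positivity)]

theorem exists_ideal_count_le : ∃ C : ℝ, 0 < C ∧ ∀ m : ℕ, 0 < m → ∀ s : Finset (Ideal (𝓞 K)),
    (∀ I ∈ s, Ideal.absNorm I = m) → (s.card : ℝ) ≤ C * m := by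
  have h := (NumberField.Ideal.tendsto_norm_le_div_atTop₀ K).comp tendsto_natCast_atTop_atTop
  obtain ⟨C, hC⟩ := h.bddAbove_range
  refine ⟨max C 1, by positivity, fun m hm s hs => ?_⟩
  have h1 := hC ⟨m, rfl⟩
  simp only [Function.comp] at h1
  have hm' : (0:ℝ) < m := by exact_mod_cast hm
  rw [div_le_iff₀ hm'] at h1
  have hfin : {I : (Ideal (𝓞 K)) | Ideal.absNorm I ≤ m}.Finite :=
    Ideal.finite_setOfPred_absNorm_le m
  have : (s.card : ℝ) ≤ (Nat.card {I : nonZeroDivisors (Ideal (𝓞 K)) // ((Ideal.absNorm (I : Ideal (𝓞 K)) : ℕ) : ℝ) ≤ (m:ℝ)} : ℝ) := by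
    rw [Nat.cast_le]
    have hf2 : Finite {I : nonZeroDivisors (Ideal (𝓞 K)) // ((Ideal.absNorm (I : Ideal (𝓞 K)) : ℕ) : ℝ) ≤ (m:ℝ)} := by
      have := hfin.to_subtype
      refine Finite.of_injective (β := {I : (Ideal (𝓞 K)) | Ideal.absNorm I ≤ m}) (fun I => ⟨I.1.1, by exact_mod_cast I.2⟩) ?_
      intro a b hab
      exact Subtype.ext (Subtype.ext (congrArg (fun x => x.1) hab))
    rw [← Nat.card_eq_finsetCard s]
    refine Nat.card_le_card_of_injective (fun I : s => ⟨⟨I.1, ?_⟩, ?_⟩) ?_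
    · rw [mem_nonZeroDivisors_iff_ne_zero]
      rintro h0
      have := hs I.1 I.2
      rw [h0] at this
      simp at this
      omega
    · exact_mod_cast (hs I.1 I.2).le
    · intro a b hab
      exact Subtype.ext (congrArg (fun x => x.1.1) hab)
  calc (s.card : ℝ) ≤ _ := this
    _ ≤ C * m := h1
    _ ≤ _ := by gcongr; exact le_max_left _ _

theorem summable_nf_three : Summable (nf K 3) := by
  classical
  obtain ⟨C, hC, h⟩ := exists_ideal_count_le K
  have hs2 : Summable (fun m : ℕ => C * (1 / (m:ℝ)^2)) :=
    (Real.summable_one_div_nat_pow.mpr one_lt_two).mul_left C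
  refine summable_of_sum_le (c := ∑' m : ℕ, C * (1 / (m:ℝ)^2)) (nf_nonneg K 3) (fun u => ?_)
  rw [← Finset.sum_fiberwise_of_maps_to (t := u.image Ideal.absNorm) (g := Ideal.absNorm)
    (fun i hi => Finset.mem_image_of_mem _ hi)]
  refine le_trans (Finset.sum_le_sum (g := fun m : ℕ => C * (1 / (m:ℝ)^2)) ?_)
    (hs2.sum_le_tsum _ (fun i _ => by positivity))
  intro m _
  rcases Nat.eq_zero_or_pos m with rfl | hm
  · have : ∑ i ∈ u with Ideal.absNorm i = 0, nf K 3 i = 0 := by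
      apply Finset.sum_eq_zero
      intro i hi
      rw [Finset.mem_filter] at hi
      simp only [nf, hi.2]
      norm_num
    rw [this]; simp
  · have hm' : (0:ℝ) < m := by exact_mod_cast hm
    calc ∑ i ∈ u with Ideal.absNorm i = m, nf K 3 i
        = ∑ i ∈ u with Ideal.absNorm i = m, (m:ℝ)^(-3:ℝ) := by
          apply Finset.sum_congr rfl
          intro i hi
          rw [Finset.mem_filter] at hi
          simp only [nf, hi.2]
      _ = ({i ∈ u | Ideal.absNorm i = m}.card : ℝ) * (m:ℝ)^(-3:ℝ) := by
          rw [Finset.sum_const, nsmul_eq_mul]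
      _ ≤ (C * m) * (m:ℝ)^(-3:ℝ) := by
          gcongr
          apply h m hm
          intro I hI
          exact (Finset.mem_filter.mp hI).2
      _ = C * (1 / (m:ℝ)^2) := by
          rw [Real.rpow_neg hm'.le]
          have : (m:ℝ)^(3:ℝ) = (m:ℝ)^(3:ℕ) := by exact_mod_cast Real.rpow_natCast (m:ℝ) 3
          rw [this]
          field_simp

theorem nf_le_of_norm {r : ℝ} (hr : 3 ≤ r) {y : ℕ} (hy : 0 < y) {J : Ideal (𝓞 K)}
    (hJ : y ≤ Ideal.absNorm J) : nf K r J ≤ (y:ℝ) ^ (3 - r) * nf K 3 J := by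
  have h1 : (0:ℝ) < y := by exact_mod_cast hy
  have h2 : (y:ℝ) ≤ Ideal.absNorm J := by exact_mod_cast hJ
  have h3 : (0:ℝ) < Ideal.absNorm J := by linarith
  unfold nf
  calc (Ideal.absNorm J : ℝ) ^ (-r) = (Ideal.absNorm J : ℝ) ^ (3 - r) * (Ideal.absNorm J : ℝ) ^ (-3:ℝ) := by
        rw [← Real.rpow_add h3]; congr 1; ring
    _ ≤ _ := by
        gcongr ?_ * _
        exact Real.rpow_le_rpow_of_nonpos h1 h2 (by linarith)

theorem nf_zero {r : ℝ} (hr : 0 < r) : nf K r 0 = 0 := by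
  simp [nf]; rw [Real.zero_rpow (by linarith)]

theorem nf_le_three {r : ℝ} (hr : 3 ≤ r) (J : Ideal (𝓞 K)) : nf K r J ≤ nf K 3 J := by
  by_cases hJ : J = 0
  · subst hJ; rw [nf_zero K (by linarith), nf_zero K (by norm_num)]
  · have := nf_le_of_norm K hr one_pos (J := J) (by
      rw [Nat.one_le_iff_ne_zero]; simpa [Ideal.absNorm_eq_zero_iff] using hJ)
    simpa using this

theorem summable_nf {r : ℝ} (hr : 3 ≤ r) : Summable (nf K r) :=
  Summable.of_nonneg_of_le (nf_nonneg K r) (nf_le_three K hr) (summable_nf_three K)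

/-- zeta value -/
noncomputable def ZK : ℝ := ∑' J, nf K 3 J

theorem ZK_pos : 0 < ZK K := by
  have := (summable_nf_three K).sum_le_tsum {1} (fun i _ => nf_nonneg K 3 i)
  rw [Finset.sum_singleton, nf_one] at this
  unfold ZK; linarith

theorem sigmaK_eq (r : ℝ) (I : Ideal (𝓞 K)) :
    sigmaK K r I = ∑' J, Set.indicator {J | J ∣ I} (nf K r) J := by
  unfold sigmaK
  rw [← tsum_subtype]
  rfl

theorem summable_ind {r : ℝ} (hr : 3 ≤ r) (A : Set (Ideal (𝓞 K))) :
    Summable (Set.indicator A (nf K r)) := (summable_nf K hr).indicator A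

theorem ind_nonneg (r : ℝ) (A : Set (Ideal (𝓞 K))) (J) : 0 ≤ Set.indicator A (nf K r) J :=
  Set.indicator_nonneg (fun x _ => nf_nonneg K r x) J

theorem sigmaK_mono {r : ℝ} (hr : 3 ≤ r) {I I' : Ideal (𝓞 K)} (h : I ∣ I') :
    sigmaK K r I ≤ sigmaK K r I' := by
  rw [sigmaK_eq, sigmaK_eq]
  refine (summable_ind K hr _).tsum_le_tsum ?_ (summable_ind K hr _)
  intro J
  exact Set.indicator_le_indicator_of_subset (fun x hx => dvd_trans hx h) (nf_nonneg K r) J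

theorem sigmaK_finset_le {r : ℝ} (hr : 3 ≤ r) {I : Ideal (𝓞 K)} (s : Finset (Ideal (𝓞 K)))
    (hs : ∀ J ∈ s, J ∣ I) : ∑ J ∈ s, nf K r J ≤ sigmaK K r I := by
  rw [sigmaK_eq]
  calc ∑ J ∈ s, nf K r J = ∑ J ∈ s, Set.indicator {J | J ∣ I} (nf K r) J := by
        apply Finset.sum_congr rfl
        intro J hJ
        rw [Set.indicator_of_mem]; exact hs J hJ
    _ ≤ _ := (summable_ind K hr _).sum_le_tsum _ (fun i _ => ind_nonneg K r _ i)

theorem sigmaK_one_le {r : ℝ} (hr : 3 ≤ r) (I : Ideal (𝓞 K)) : 1 ≤ sigmaK K r I := by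
  have := sigmaK_finset_le K hr {1} (I := I) (by simp)
  rwa [Finset.sum_singleton, nf_one] at this

theorem sigmaK_le_ZK {r : ℝ} (hr : 3 ≤ r) (I : Ideal (𝓞 K)) : sigmaK K r I ≤ ZK K := by
  rw [sigmaK_eq]
  refine (summable_ind K hr _).tsum_le_tsum ?_ (summable_nf_three K)
  intro J
  exact (Set.indicator_le_self' (fun x _ => nf_nonneg K r x) J).trans (nf_le_three K hr J)

theorem tail_le {r : ℝ} (hr : 3 ≤ r) (y : ℕ) :
    ∑' J, Set.indicator {J : Ideal (𝓞 K) | y < Ideal.absNorm J} (nf K r) J ≤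
      ((y + 1 : ℕ) : ℝ) ^ (3 - r) * ZK K := by
  unfold ZK
  rw [← tsum_mul_left]
  refine (summable_ind K hr _).tsum_le_tsum ?_ ((summable_nf_three K).mul_left _)
  intro J
  by_cases h : J ∈ {J : Ideal (𝓞 K) | y < Ideal.absNorm J}
  · rw [Set.indicator_of_mem h]
    exact nf_le_of_norm K hr (Nat.succ_pos y) h
  · rw [Set.indicator_of_notMem h]
    have := nf_nonneg K 3 J
    positivity

theorem sigmaK_le_of_large {r : ℝ} (hr : 3 ≤ r) (y : ℕ) {I : Ideal (𝓞 K)} (hI : I ≠ 0)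
    (h : ∀ P, Prime P → P ∣ I → y < Ideal.absNorm P) :
    sigmaK K r I ≤ 1 + ((y + 1 : ℕ) : ℝ) ^ (3 - r) * ZK K := by
  classical
  refine le_trans ?_ (add_le_add_right (tail_le K hr y) 1)
  have h1 : (∑' J, Set.indicator {(1 : Ideal (𝓞 K))} (nf K r) J) = 1 := by
    rw [tsum_eq_single 1]
    · rw [Set.indicator_of_mem (Set.mem_singleton _), nf_one]
    · intro b hb; rw [Set.indicator_of_notMem (by simpa only [Set.mem_singleton_iff] using hb)]
  rw [← h1, sigmaK_eq, ← (summable_ind K hr _).tsum_add (summable_ind K hr _)]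
  refine (summable_ind K hr _).tsum_le_tsum ?_ ((summable_ind K hr _).add (summable_ind K hr _))
  intro J
  by_cases hJ : J ∣ I
  · rw [Set.indicator_of_mem (by exact hJ)]
    by_cases hJ1 : J = 1
    · rw [Set.indicator_of_mem (by exact hJ1)]
      have := ind_nonneg K r {J : Ideal (𝓞 K) | y < Ideal.absNorm J} J
      linarith
    · have hJ0 : J ≠ 0 := ne_zero_of_dvd_ne_zero hI hJ
      obtain ⟨P, hP, hPJ⟩ := WfDvdMonoid.exists_irreducible_factor
        (by simpa [Ideal.isUnit_iff] using hJ1) hJ0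
      have h2 := h P hP.prime (hPJ.trans hJ)
      have h3 : Ideal.absNorm P ≤ Ideal.absNorm J := by
        apply Nat.le_of_dvd
        · rw [Nat.pos_iff_ne_zero]; simpa [Ideal.absNorm_eq_zero_iff] using hJ0
        · exact map_dvd _ hPJ
      rw [Set.indicator_of_mem (s := {J : Ideal (𝓞 K) | y < Ideal.absNorm J}) (by
        simp only [Set.mem_ofPred_eq]; omega)]
      have := ind_nonneg K r {(1 : Ideal (𝓞 K))} J
      linarith
  · rw [Set.indicator_of_notMem (by exact hJ)]
    exact add_nonneg (ind_nonneg K r _ _) (ind_nonneg K r _ _)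

theorem sigmaK_pow_succ_le {r : ℝ} (hr : 3 ≤ r) {P : Ideal (𝓞 K)} (hP : Prime P) (v : ℕ) :
    sigmaK K r (P ^ (v+1)) ≤ (1 + nf K r P) * sigmaK K r (P ^ v) := by
  classical
  have h1 : (∑' J, Set.indicator {P ^ (v+1)} (nf K r) J) = nf K r (P ^ (v+1)) := by
    rw [tsum_eq_single (P ^ (v+1))]
    · simp
    · intro b hb; simp [hb]
  have h2 : nf K r (P ^ (v+1)) ≤ nf K r P := by
    have h2 := two_le_absNorm_of_prime hP
    have h2' : (2:ℝ) ≤ Ideal.absNorm P := by exact_mod_cast h2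
    unfold nf
    apply Real.rpow_le_rpow_of_nonpos
    · linarith
    · rw [map_pow]; push_cast
      exact le_self_pow₀ (by linarith) (by omega)
    · linarith
  have h3 : sigmaK K r (P ^ (v+1)) ≤ sigmaK K r (P ^ v) + nf K r (P ^ (v+1)) := by
    rw [← h1, sigmaK_eq, sigmaK_eq, ← (summable_ind K hr _).tsum_add (summable_ind K hr _)]
    refine (summable_ind K hr _).tsum_le_tsum ?_ ((summable_ind K hr _).add (summable_ind K hr _))
    intro J
    by_cases hJ : J ∣ P ^ (v+1)
    · rw [Set.indicator_of_mem (by exact hJ)]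
      obtain ⟨i, hi, hJi⟩ := (dvd_prime_pow hP _).1 hJ
      rw [associated_iff_eq] at hJi
      rcases Nat.lt_or_ge i (v+1) with h | h
      · rw [Set.indicator_of_mem (s := {J | J ∣ P ^ v})]
        · have := ind_nonneg K r {P ^ (v+1)} J
          linarith
        · rw [hJi]; exact pow_dvd_pow _ (by omega)
      · have : i = v + 1 := by omega
        rw [Set.indicator_of_mem (s := {P ^ (v+1)})]
        · have := ind_nonneg K r {J | J ∣ P ^ v} J
          linarith
        · rw [hJi, this]; rfl
    · rw [Set.indicator_of_notMem (by exact hJ)]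
      exact add_nonneg (ind_nonneg K r _ _) (ind_nonneg K r _ _)
  have h4 := sigmaK_one_le K hr (P ^ v)
  have h5 := nf_nonneg K r P
  nlinarith

theorem sigmaK_mul {r : ℝ} (hr : 3 ≤ r) {I J : Ideal (𝓞 K)} (hI : I ≠ 0)
    (hIJ : ∀ P, Prime P → P ∣ I → ¬ P ∣ J) :
    sigmaK K r (I * J) = sigmaK K r I * sigmaK K r J := by
  have hrel : IsRelPrime I J := by
    rw [UniqueFactorizationMonoid.isRelPrime_iff_no_prime_factors hI]
    intro d hd1 hd2 hd
    exact hIJ d hd hd1 hd2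
  have hdec : DecompositionMonoid (Ideal (𝓞 K)) := inferInstance
  unfold sigmaK
  have hsI : Summable (fun D : {D // D ∣ I} => nf K r D.1) :=
    (summable_nf K hr).comp_injective Subtype.val_injective
  have hsJ : Summable (fun D : {D // D ∣ J} => nf K r D.1) :=
    (summable_nf K hr).comp_injective Subtype.val_injective
  change ∑' D : {D // D ∣ I * J}, nf K r D.1 = (∑' D : {D // D ∣ I}, nf K r D.1) *
    (∑' D : {D // D ∣ J}, nf K r D.1)
  rw [hsI.tsum_mul_tsum hsJ (hsI.mul_of_nonneg hsJ (fun _ => nf_nonneg K r _)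
    (fun _ => nf_nonneg K r _))]
  let e : ({D // D ∣ I} × {D // D ∣ J}) → {D // D ∣ I * J} :=
    fun x => ⟨x.1.1 * x.2.1, mul_dvd_mul x.1.2 x.2.2⟩
  have he : Function.Bijective e := by
    constructor
    · rintro ⟨⟨a, ha⟩, ⟨b, hb⟩⟩ ⟨⟨a', ha'⟩, ⟨b', hb'⟩⟩ h
      simp only [e, Subtype.mk.injEq] at h
      have key : ∀ a b a' b' : Ideal (𝓞 K), a ∣ I → b ∣ J → a' ∣ I → b' ∣ J → a * b = a' * b' →
          a ∣ a' ∧ b ∣ b' := by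
        intro a b a' b' ha hb ha' hb' h
        constructor
        · exact ((hrel.of_dvd_left ha).of_dvd_right hb').dvd_of_dvd_mul_right (h ▸ dvd_mul_right a b)
        · exact ((hrel.of_dvd_left ha').of_dvd_right hb).symm.dvd_of_dvd_mul_left
            (h ▸ dvd_mul_left b a)
      have h1 := key a b a' b' ha hb ha' hb' h
      have h2 := key a' b' a b ha' hb' ha hb h.symm
      have e1 : a = a' := dvd_antisymm h1.1 h2.1
      have e2 : b = b' := dvd_antisymm h1.2 h2.2
      subst e1 e2
      rfl
    · rintro ⟨d, hd⟩
      obtain ⟨a, b, ha, hb, rfl⟩ := exists_dvd_and_dvd_of_dvd_mul hd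
      exact ⟨⟨⟨a, ha⟩, ⟨b, hb⟩⟩, rfl⟩
  rw [← (Equiv.ofBijective e he).tsum_eq]
  apply tsum_congr
  rintro ⟨a, b⟩
  simp [e, nf_mul]

end partE


section grid

theorem finite_components_of_grid (S : Set ℝ) (B δ : ℝ) (hδ : 0 < δ)
    (h : ∀ s ∈ S, ∃ a b, 0 ≤ a ∧ a ≤ s ∧ s ≤ b ∧ a + δ ≤ b ∧ b ≤ B ∧ Set.Icc a b ⊆ closure S) :
    Finite (ConnectedComponents ↥(closure S)) := by
  classical
  let X := ↥(closure S)
  let mk : X → ConnectedComponents X := ConnectedComponents.mk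
  let T : Set X := {x | ∃ n : ℕ, n ≤ ⌊B / δ⌋₊ ∧ x.1 = n * δ}
  have hT : T.Finite := by
    have : (Subtype.val '' T).Finite := by
      refine ((Finset.range (⌊B / δ⌋₊ + 1)).finite_toSet.image (fun n : ℕ => (n:ℝ) * δ)).subset ?_
      rintro _ ⟨x, ⟨n, hn, hx⟩, rfl⟩
      exact ⟨n, by simp; omega, hx.symm⟩
    exact this.of_finite_image Subtype.val_injective.injOn
  let S' : Set X := {x | x.1 ∈ S}
  have hS' : Dense S' := by
    intro x
    rw [closure_subtype]
    have : Subtype.val '' S' = S := by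
      ext z; constructor
      · rintro ⟨x, hx, rfl⟩; exact hx
      · intro hz; exact ⟨⟨z, subset_closure hz⟩, hz, rfl⟩
    rw [this]; exact x.2
  have hsub : mk '' S' ⊆ mk '' T := by
    rintro _ ⟨x, hx, rfl⟩
    obtain ⟨a, b, ha, hax, hxb, hab, hbB, hI⟩ := h x.1 hx
    let n := ⌈a / δ⌉₊
    have hn1 : a ≤ n * δ := by
      have := Nat.le_ceil (a / δ)
      rwa [div_le_iff₀ hδ] at this
    have hn2 : n * δ ≤ b := by
      have := (Nat.ceil_lt_add_one (a := a / δ) (by positivity)).le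
      have h2 : (n:ℝ) * δ ≤ (a / δ + 1) * δ := by gcongr
      have : (a / δ + 1) * δ = a + δ := by field_simp
      linarith
    have hg : (n:ℝ) * δ ∈ closure S := hI ⟨hn1, hn2⟩
    refine ⟨⟨n * δ, hg⟩, ⟨n, ?_, rfl⟩, ?_⟩
    · apply Nat.le_floor
      rw [le_div_iff₀ hδ]; linarith
    · have hpre : IsPreconnected (mk '' ((Set.inclusion hI) '' Set.univ)) := by
        have : PreconnectedSpace (Set.Icc a b) := Subtype.preconnectedSpace isPreconnected_Icc
        exact (isPreconnected_univ.image _ (continuous_inclusion hI).continuousOn).image _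
          ConnectedComponents.continuous_coe.continuousOn
      refine hpre.subsingleton ?_ ?_
      · exact ⟨_, ⟨⟨n * δ, ⟨hn1, hn2⟩⟩, trivial, rfl⟩, rfl⟩
      · exact ⟨x, ⟨⟨x.1, ⟨hax, hxb⟩⟩, trivial, rfl⟩, rfl⟩
  have hfin : (mk '' S').Finite := (hT.image mk).subset hsub
  have hdense : Dense (mk '' S') :=
    ConnectedComponents.surjective_coe.denseRange.dense_image ConnectedComponents.continuous_coe hS'
  have huniv : mk '' S' = Set.univ := by
    rw [← hfin.isClosed.closure_eq, hdense.closure_eq]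
  rw [huniv] at hfin
  exact Set.finite_univ_iff.mp hfin

end grid

section partF
variable (K : Type*) [Field K] [NumberField K]

/-- `p` is a rational prime and the norm of a prime ideal -/
def IsGood (p : ℕ) : Prop := p.Prime ∧ ∃ P : Ideal (𝓞 K), Prime P ∧ Ideal.absNorm P = p

open Classical in
/-- a chosen prime ideal of norm `p` -/
noncomputable def gp (p : ℕ) : Ideal (𝓞 K) :=
  if h : ∃ P : Ideal (𝓞 K), Prime P ∧ Ideal.absNorm P = p then h.choose else 1

theorem gp_prime {p : ℕ} (h : IsGood K p) : Prime (gp K p) := by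
  unfold gp; rw [dif_pos h.2]; exact h.2.choose_spec.1

theorem gp_norm {p : ℕ} (h : IsGood K p) : Ideal.absNorm (gp K p) = p := by
  unfold gp; rw [dif_pos h.2]; exact h.2.choose_spec.2

/-- product of the chosen prime ideals -/
noncomputable def gprod (A : Finset ℕ) : Ideal (𝓞 K) := ∏ p ∈ A, gp K p

theorem gprod_ne_zero {A : Finset ℕ} (hA : ∀ p ∈ A, IsGood K p) : gprod K A ≠ 0 :=
  Finset.prod_ne_zero_iff.mpr fun p hp => (gp_prime K (hA p hp)).ne_zero

theorem dvd_gprod {A : Finset ℕ} (hA : ∀ p ∈ A, IsGood K p) {Q : Ideal (𝓞 K)} (hQ : Prime Q)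
    (h : Q ∣ gprod K A) : ∃ p ∈ A, Q = gp K p := by
  obtain ⟨p, hp, hQp⟩ := (hQ.dvd_finsetProd_iff _).1 h
  exact ⟨p, hp, associated_iff_eq.mp
    (hQ.irreducible.associated_of_dvd (gp_prime K (hA p hp)).irreducible hQp)⟩

/-- `J` is nonzero with all prime divisors in `A` -/
def SuppOn (A : Set (Ideal (𝓞 K))) (J : Ideal (𝓞 K)) : Prop :=
  J ≠ 0 ∧ ∀ P, Prime P → P ∣ J → P ∈ A

variable {K}

theorem SuppOn.mono {A B : Set (Ideal (𝓞 K))} {J} (h : SuppOn K A J) (hAB : A ⊆ B) :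
    SuppOn K B J := ⟨h.1, fun P hP hPJ => hAB (h.2 P hP hPJ)⟩

theorem SuppOn.mul {A : Set (Ideal (𝓞 K))} {I J} (h : SuppOn K A I) (h' : SuppOn K A J) :
    SuppOn K A (I * J) := ⟨mul_ne_zero h.1 h'.1, fun P hP hPJ => by
      rcases hP.dvd_or_dvd hPJ with h1 | h1
      · exact h.2 P hP h1
      · exact h'.2 P hP h1⟩

theorem SuppOn.one {A : Set (Ideal (𝓞 K))} : SuppOn K A 1 :=
  ⟨one_ne_zero, fun _ hP h => absurd (isUnit_of_dvd_one h) hP.not_isUnit⟩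

theorem SuppOn.pow {A : Set (Ideal (𝓞 K))} {P} (hP : Prime P) (h : P ∈ A) (v : ℕ) :
    SuppOn K A (P ^ v) := ⟨pow_ne_zero _ hP.ne_zero, fun Q hQ hQP => by
      have := associated_iff_eq.mp (hQ.irreducible.associated_of_dvd hP.irreducible
        (hQ.dvd_of_dvd_pow hQP))
      rwa [this]⟩

theorem SuppOn.sigmaK_mul {r : ℝ} (hr : 3 ≤ r) {A B : Set (Ideal (𝓞 K))} {I J} (hI : SuppOn K A I)
    (hJ : SuppOn K B J) (hAB : ∀ P ∈ A, P ∉ B) :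
    sigmaK K r (I * J) = sigmaK K r I * sigmaK K r J :=
  _root_.sigmaK_mul K hr hI.1 fun P hP h1 h2 => hAB P (hI.2 P hP h1) (hJ.2 P hP h2)

variable (K)

theorem exists_big (r : ℝ) (hr : 3 ≤ r) : ∃ y₀ : ℕ, 1 ≤ y₀ ∧ ∀ q : ℕ, y₀ ≤ q →
    ∃ J, SuppOn K {P | q < Ideal.absNorm P} J ∧ 1 + (q:ℝ) ^ (-r) ≤ sigmaK K r J := by
  classical
  obtain ⟨H, x₀, c, hH, hc, hx₀, hcount⟩ := goodPrimes_count K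
  have hlim : Filter.Tendsto (fun n : ℕ => (n:ℝ) / Real.log n) Filter.atTop Filter.atTop := by
    have h1 : Filter.Tendsto (fun x : ℝ => x / Real.log x) Filter.atTop Filter.atTop := by
      have h2 := Real.isLittleO_log_id_atTop.tendsto_div_nhds_zero
      have h3 : Filter.Tendsto (fun x : ℝ => Real.log x / id x) Filter.atTop (nhdsWithin 0 (Set.Ioi 0)) := by
        rw [tendsto_nhdsWithin_iff]
        refine ⟨h2, ?_⟩
        filter_upwards [Filter.eventually_gt_atTop 1] with x hx
        have := Real.log_pos hx
        simp only [Set.mem_Ioi, id]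
        positivity
      have h4 := h3.inv_tendsto_nhdsGT_zero
      refine h4.congr (fun x => ?_)
      simp [inv_div]
    exact h1.comp tendsto_natCast_atTop_atTop
  obtain ⟨n₀, hn₀⟩ := Filter.eventually_atTop.mp (hlim.eventually_ge_atTop ((H:ℝ) ^ r / c))
  refine ⟨max x₀ n₀, by omega, fun q hq => ?_⟩
  have hq1 : x₀ ≤ q := le_trans (le_max_left _ _) hq
  have hq2 : n₀ ≤ q := le_trans (le_max_right _ _) hq
  have hq0 : 0 < q := by omega
  have hqR : (0:ℝ) < q := by exact_mod_cast hq0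
  have hHR : (0:ℝ) < H := by exact_mod_cast hH
  set A := goodPrimes K q (H * q) with hAdef
  have hA : ∀ p ∈ A, (q < p ∧ p ≤ H * q) ∧ IsGood K p := by
    intro p hp
    exact (mem_goodPrimes K).1 hp
  have hcard : (H:ℝ) ^ r ≤ A.card := by
    refine le_trans ?_ (hcount q hq1)
    have := hn₀ q hq2
    rw [div_le_iff₀ hc] at this
    linarith
  refine ⟨gprod K A, ⟨gprod_ne_zero K fun p hp => (hA p hp).2, ?_⟩, ?_⟩
  · intro P hP hPd
    obtain ⟨p, hp, rfl⟩ := dvd_gprod K (fun p hp => (hA p hp).2) hP hPd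
    change q < Ideal.absNorm (gp K p)
    rw [gp_norm K (hA p hp).2]
    exact (hA p hp).1.1
  · have hinj : Set.InjOn (gp K) (A : Set ℕ) := by
      intro a ha b hb hab
      rw [← gp_norm K (hA a ha).2, ← gp_norm K (hA b hb).2, hab]
    have hs := sigmaK_finset_le K hr (I := gprod K A) (insert 1 (A.image (gp K))) (by
      intro J hJ
      rcases Finset.mem_insert.mp hJ with rfl | hJ
      · exact one_dvd _
      · obtain ⟨p, hp, rfl⟩ := Finset.mem_image.mp hJ
        exact Finset.dvd_prod_of_mem _ hp)
    rw [Finset.sum_insert, Finset.sum_image hinj, nf_one] at hs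
    swap
    · intro h1
      obtain ⟨p, hp, hp1⟩ := Finset.mem_image.mp h1
      exact (gp_prime K (hA p hp).2).ne_one hp1
    refine le_trans ?_ hs
    have hq' : (q:ℝ) ^ (-r) ≤ ∑ p ∈ A, nf K r (gp K p) := by
      calc (q:ℝ) ^ (-r) = (H:ℝ) ^ r * ((H:ℝ) * q) ^ (-r) := by
            rw [Real.mul_rpow hHR.le hqR.le, ← mul_assoc, ← Real.rpow_add hHR]; simp
        _ ≤ A.card * ((H:ℝ) * q) ^ (-r) := by gcongr
        _ = ∑ p ∈ A, ((H:ℝ) * q) ^ (-r) := by rw [Finset.sum_const, nsmul_eq_mul]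
        _ ≤ _ := by
            apply Finset.sum_le_sum
            intro p hp
            unfold nf
            rw [gp_norm K (hA p hp).2]
            have h1 := (hA p hp).1
            apply Real.rpow_le_rpow_of_nonpos
            · exact_mod_cast (by omega : 0 < p)
            · exact_mod_cast h1.2
            · linarith
    linarith

variable {K}

theorem exists_factor {P : Ideal (𝓞 K)} (hP : Prime P) {J : Ideal (𝓞 K)} (hJ : J ≠ 0) :
    ∃ (w : ℕ) (J' : Ideal (𝓞 K)), J = P ^ w * J' ∧ ¬ P ∣ J' := by
  obtain ⟨J', h1, h2⟩ := (FiniteMultiplicity.of_prime_left hP hJ).exists_eq_pow_mul_and_not_dvd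
  exact ⟨_, J', h1, h2⟩

theorem step_one {r : ℝ} (hr : 3 ≤ r) {A : Set (Ideal (𝓞 K))} {P : Ideal (𝓞 K)} (hP : Prime P)
    (hPA : P ∉ A) (hbig : ∃ J, SuppOn K A J ∧ 1 + nf K r P ≤ sigmaK K r J)
    {t : ℝ} (ht : 1 ≤ t) {J} (hJ : SuppOn K (insert P A) J) (htJ : t < sigmaK K r J) :
    ∃ v : ℕ, sigmaK K r (P ^ v) ≤ t ∧ ∃ J', SuppOn K A J' ∧
      t < sigmaK K r (P ^ v) * sigmaK K r J' := by
  classical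
  have hex : ∃ v : ℕ, ∃ J', SuppOn K A J' ∧ t < sigmaK K r (P ^ v) * sigmaK K r J' := by
    obtain ⟨w, J', rfl, hPJ⟩ := exists_factor hP hJ.1
    have hJ' : SuppOn K A J' := by
      refine ⟨right_ne_zero_of_mul hJ.1, fun Q hQ hQJ => ?_⟩
      rcases hJ.2 Q hQ (hQJ.mul_left _) with h | h
      · exact absurd (h ▸ hQJ) hPJ
      · exact h
    refine ⟨w, J', hJ', ?_⟩
    rwa [(SuppOn.pow hP (Set.mem_singleton P) w).sigmaK_mul hr hJ'] at htJ
    intro Q hQ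
    rw [Set.mem_singleton_iff.mp hQ]; exact hPA
  have hspec := Nat.find_spec hex
  have hmin := fun m => Nat.find_min hex (m := m)
  refine ⟨Nat.find hex, ?_, hspec⟩
  generalize Nat.find hex = v at *
  rcases v with _ | u
  · have : sigmaK K r (P ^ 0) = 1 := by
      have h1 := sigmaK_le_of_large K hr
      rw [pow_zero, sigmaK_eq, tsum_eq_single 1]
      · rw [Set.indicator_of_mem (by exact dvd_refl _), nf_one]
      · intro b hb
        rw [Set.indicator_of_notMem]
        intro h; exact hb (dvd_antisymm h (one_dvd _))
    rw [this]; exact ht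
  · by_contra hcon
    push Not at hcon
    obtain ⟨Js, hJs, hJs1⟩ := hbig
    apply hmin u (Nat.lt_succ_self u)
    refine ⟨Js, hJs, hcon.trans_le ?_⟩
    refine (sigmaK_pow_succ_le K hr hP u).trans ?_
    rw [mul_comm]
    have := sigmaK_one_le K hr (P ^ u)
    gcongr

theorem sigmaK_one {r : ℝ} : sigmaK K r 1 = 1 := by
  rw [sigmaK_eq, tsum_eq_single 1]
  · rw [Set.indicator_of_mem (by exact dvd_refl _), nf_one]
  · intro b hb
    rw [Set.indicator_of_notMem]
    intro h; exact hb (dvd_antisymm h (one_dvd _))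

theorem step_finset {r : ℝ} (hr : 3 ≤ r) {A : Set (Ideal (𝓞 K))} (S : Finset (Ideal (𝓞 K)))
    (hS : ∀ P ∈ S, Prime P ∧ P ∉ A ∧ ∃ J, SuppOn K A J ∧ 1 + nf K r P ≤ sigmaK K r J) :
    ∀ {t : ℝ} (_ : 1 ≤ t) {J} (_ : SuppOn K (A ∪ S) J) (_ : t < sigmaK K r J),
    ∃ J₀ J₁, SuppOn K S J₀ ∧ sigmaK K r J₀ ≤ t ∧ SuppOn K A J₁ ∧
      t < sigmaK K r J₀ * sigmaK K r J₁ := by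
  classical
  induction S using Finset.induction_on with
  | empty =>
    intro t ht J hJ htJ
    refine ⟨1, J, SuppOn.one, ?_, by simpa using hJ, ?_⟩
    · rw [sigmaK_one]; exact ht
    · rw [sigmaK_one, one_mul]; exact htJ
  | insert P S hPS ih =>
    intro t ht J hJ htJ
    obtain ⟨hP, hPA, Js, hJs, hJs1⟩ := hS P (Finset.mem_insert_self _ _)
    obtain ⟨v, hv, J', hJ', htJ'⟩ := step_one hr (A := A ∪ S) hP (by simp [hPA, hPS])
      ⟨Js, hJs.mono Set.subset_union_left, hJs1⟩ ht (hJ.mono (by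
        intro x hx; simp at hx ⊢; tauto)) htJ
    have hpos : 0 < sigmaK K r (P ^ v) := lt_of_lt_of_le one_pos (sigmaK_one_le K hr _)
    obtain ⟨J₀, J₁, h1, h2, h3, h4⟩ := ih (fun Q hQ => hS Q (Finset.mem_insert_of_mem hQ))
      (t := t / sigmaK K r (P ^ v)) ((one_le_div hpos).mpr hv) hJ'
      ((div_lt_iff₀' hpos).mpr htJ')
    have hm : sigmaK K r (P ^ v * J₀) = sigmaK K r (P ^ v) * sigmaK K r J₀ :=
      (SuppOn.pow hP (Set.mem_singleton P) v).sigmaK_mul hr h1 (by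
        intro Q hQ; rw [Set.mem_singleton_iff.mp hQ]; simpa using hPS)
    refine ⟨P ^ v * J₀, J₁, ?_, ?_, h3, ?_⟩
    · exact (SuppOn.pow hP (by simp) v).mul (h1.mono (by simp))
    · rw [hm]; rwa [le_div_iff₀' hpos] at h2
    · rw [hm, mul_assoc]; rwa [div_lt_iff₀' hpos] at h4

theorem chain {r : ℝ} (hr : 3 ≤ r) {y₀ : ℕ} (hbig : ∀ q : ℕ, y₀ ≤ q →
    ∃ J, SuppOn K {P | q < Ideal.absNorm P} J ∧ 1 + (q:ℝ) ^ (-r) ≤ sigmaK K r J)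
    {t : ℝ} (ht : 1 ≤ t) {J} (hJ : SuppOn K {P | y₀ < Ideal.absNorm P} J)
    (htJ : t < sigmaK K r J) (y : ℕ) (hy : y₀ ≤ y) :
    ∃ J₀ J₁, SuppOn K {P | y₀ < Ideal.absNorm P ∧ Ideal.absNorm P ≤ y} J₀ ∧ sigmaK K r J₀ ≤ t ∧
      SuppOn K {P | y < Ideal.absNorm P} J₁ ∧ t < sigmaK K r J₀ * sigmaK K r J₁ := by
  classical
  induction y, hy using Nat.le_induction with
  | base =>
    refine ⟨1, J, SuppOn.one, ?_, hJ, ?_⟩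
    · rw [sigmaK_one]; exact ht
    · rw [sigmaK_one, one_mul]; exact htJ
  | succ y hy ih =>
    obtain ⟨J₀, J₁, h1, h2, h3, h4⟩ := ih
    have hpos : 0 < sigmaK K r J₀ := lt_of_lt_of_le one_pos (sigmaK_one_le K hr _)
    have hfin : {P : Ideal (𝓞 K) | Prime P ∧ Ideal.absNorm P = y + 1}.Finite :=
      (Ideal.finite_setOfPred_absNorm_le (y+1)).subset (fun P hP => hP.2.le)
    obtain ⟨J₂, J₃, g1, g2, g3, g4⟩ := step_finset hr (A := {P | y + 1 < Ideal.absNorm P})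
      hfin.toFinset (by
        intro P hP
        have hP' := hfin.mem_toFinset.mp hP
        refine ⟨hP'.1, ?_, ?_⟩
        · intro h
          have h5 : y + 1 < Ideal.absNorm P := h
          have := hP'.2; omega
        · unfold nf; rw [hP'.2]
          exact hbig (y+1) (by omega))
      (t := t / sigmaK K r J₀) ((one_le_div hpos).mpr h2) (J := J₁) (by
        refine ⟨h3.1, fun P hP hPJ => ?_⟩
        have h5 : y < Ideal.absNorm P := h3.2 P hP hPJ
        rcases Nat.lt_or_ge (y+1) (Ideal.absNorm P) with h | h
        · left; exact h
        · right; rw [Finset.mem_coe, hfin.mem_toFinset]; exact ⟨hP, by omega⟩)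
      ((div_lt_iff₀' hpos).mpr h4)
    have g1' : SuppOn K {P | Ideal.absNorm P = y + 1} J₂ := g1.mono (by
      intro P hP; exact (hfin.mem_toFinset.mp hP).2)
    have hm : sigmaK K r (J₀ * J₂) = sigmaK K r J₀ * sigmaK K r J₂ :=
      h1.sigmaK_mul hr g1' (by
        intro P hP hP2
        have a1 : Ideal.absNorm P ≤ y := hP.2
        have a2 : Ideal.absNorm P = y + 1 := hP2
        omega)
    refine ⟨J₀ * J₂, J₃, ?_, ?_, g3, ?_⟩
    · refine (h1.mono ?_).mul (g1'.mono ?_)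
      · intro P hP; exact ⟨hP.1, hP.2.trans (by omega)⟩
      · intro P hP
        have a2 : Ideal.absNorm P = y + 1 := hP
        exact ⟨by omega, by omega⟩
    · rw [hm]; rwa [le_div_iff₀' hpos] at g2
    · rw [hm, mul_assoc]; rwa [div_lt_iff₀' hpos] at g4

theorem mem_closure_sigma {r : ℝ} (hr : 3 < r) {y₀ : ℕ} (hbig : ∀ q : ℕ, y₀ ≤ q →
    ∃ J, SuppOn K {P | q < Ideal.absNorm P} J ∧ 1 + (q:ℝ) ^ (-r) ≤ sigmaK K r J)
    {I : Ideal (𝓞 K)} (hI : SuppOn K {P | Ideal.absNorm P ≤ y₀} I)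
    {J} (hJ : SuppOn K {P | y₀ < Ideal.absNorm P} J) {t : ℝ}
    (ht : sigmaK K r I ≤ t) (htJ : t < sigmaK K r I * sigmaK K r J) :
    t ∈ closure (sigmaK K r '' {I : Ideal (𝓞 K) | I ≠ 0}) := by
  have hpos : 0 < sigmaK K r I := lt_of_lt_of_le one_pos (sigmaK_one_le K hr.le _)
  rw [Metric.mem_closure_iff]
  intro ε hε
  have hZ := ZK_pos K
  have hlim : Filter.Tendsto (fun y : ℕ => ZK K * (((y + 1 : ℕ) : ℝ) ^ (3 - r) * ZK K))
      Filter.atTop (nhds 0) := by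
    have h1 : Filter.Tendsto (fun x : ℝ => x ^ (-(r - 3))) Filter.atTop (nhds 0) :=
      tendsto_rpow_neg_atTop (by linarith)
    have h2 := h1.comp (tendsto_natCast_atTop_atTop.comp (Filter.tendsto_add_atTop_nat 1))
    have h3 := (h2.mul_const (ZK K)).const_mul (ZK K)
    simp only [zero_mul, mul_zero] at h3
    refine h3.congr (fun y => ?_)
    simp [neg_sub]
  obtain ⟨y₁, hy₁⟩ := Filter.eventually_atTop.mp (hlim.eventually_lt_const hε)
  set y := max y₀ y₁
  obtain ⟨J₀, J₁, h1, h2, h3, h4⟩ := chain hr.le hbig (t := t / sigmaK K r I)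
    ((one_le_div hpos).mpr ht) hJ ((div_lt_iff₀' hpos).mpr htJ) y (le_max_left _ _)
  have hm : sigmaK K r (I * J₀) = sigmaK K r I * sigmaK K r J₀ :=
    hI.sigmaK_mul hr.le h1 (by
      intro P hP hP2
      have a1 : Ideal.absNorm P ≤ y₀ := hP
      have a2 : y₀ < Ideal.absNorm P := hP2.1
      omega)
  rw [le_div_iff₀' hpos] at h2
  rw [div_lt_iff₀' hpos, ← mul_assoc] at h4
  refine ⟨_, ⟨I * J₀, mul_ne_zero hI.1 h1.1, rfl⟩, ?_⟩
  rw [Real.dist_eq, hm, abs_of_nonneg (by linarith)]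
  have h5 := sigmaK_le_of_large K hr.le y h3.1 (fun P hP hPJ => h3.2 P hP hPJ)
  have h6 := hy₁ y (le_max_right _ _)
  have h7 := sigmaK_le_ZK K hr.le (I * J₀)
  rw [hm] at h7
  set s := sigmaK K r I * sigmaK K r J₀
  set T := ((y + 1 : ℕ) : ℝ) ^ (3 - r) * ZK K
  have hT : 0 ≤ T := by positivity
  have hs : 0 ≤ s := mul_nonneg hpos.le (le_trans zero_le_one (sigmaK_one_le K hr.le _))
  have : s * sigmaK K r J₁ ≤ s * (1 + T) := by gcongr
  have : s * T ≤ ZK K * T := by gcongr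
  linarith

theorem exists_split (y : ℕ) {I : Ideal (𝓞 K)} (hI : I ≠ 0) :
    ∃ I₀ I₁, I = I₀ * I₁ ∧ SuppOn K {P | Ideal.absNorm P ≤ y} I₀ ∧
      SuppOn K {P | y < Ideal.absNorm P} I₁ := by
  induction I using UniqueFactorizationMonoid.induction_on_prime with
  | h₁ => exact absurd rfl hI
  | h₂ x hx =>
    refine ⟨1, 1, ?_, SuppOn.one, SuppOn.one⟩
    rw [one_mul, Ideal.one_eq_top]; exact Ideal.isUnit_iff.mp hx
  | h₃ a p ha hp ih =>
    obtain ⟨I₀, I₁, rfl, h0, h1⟩ := ih ha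
    rcases Nat.lt_or_ge y (Ideal.absNorm p) with h | h
    · refine ⟨I₀, p * I₁, by ring, h0, ?_⟩
      have := SuppOn.pow (A := {P | y < Ideal.absNorm P}) hp h 1
      rw [pow_one] at this
      exact this.mul h1
    · refine ⟨p * I₀, I₁, by ring, ?_, h1⟩
      have := SuppOn.pow (A := {P | Ideal.absNorm P ≤ y}) hp h 1
      rw [pow_one] at this
      exact this.mul h0

variable (K)

theorem finite_components {r : ℝ} (hr : 3 < r) :
    Finite (ConnectedComponents
      ↥(closure (sigmaK K r '' {I : Ideal (𝓞 K) | I ≠ 0}))) := by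
  obtain ⟨y₀, hy₀, hbig⟩ := exists_big K r hr.le
  obtain ⟨Js, hJs, hJs1⟩ := hbig y₀ le_rfl
  have hy : (0:ℝ) < y₀ := by exact_mod_cast hy₀
  refine finite_components_of_grid _ (ZK K) ((y₀:ℝ) ^ (-r)) (by positivity) ?_
  rintro _ ⟨I, hI, rfl⟩
  obtain ⟨I₀, I₁, rfl, h0, h1⟩ := exists_split y₀ hI
  have hdisj : ∀ P ∈ {P : Ideal (𝓞 K) | Ideal.absNorm P ≤ y₀},
      P ∉ {P : Ideal (𝓞 K) | y₀ < Ideal.absNorm P} := by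
    intro P hP hP2
    have a1 : Ideal.absNorm P ≤ y₀ := hP
    have a2 : y₀ < Ideal.absNorm P := hP2
    omega
  have hs := sigmaK_one_le K hr.le I₀
  have key : ∃ J, SuppOn K {P : Ideal (𝓞 K) | y₀ < Ideal.absNorm P} J ∧
      sigmaK K r I₁ ≤ sigmaK K r J ∧ sigmaK K r Js ≤ sigmaK K r J := by
    rcases le_total (sigmaK K r I₁) (sigmaK K r Js) with h | h
    · exact ⟨Js, hJs, h, le_rfl⟩
    · exact ⟨I₁, h1, le_rfl, h⟩
  obtain ⟨J, hJ, hJ1, hJ2⟩ := key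
  have hJZ := sigmaK_le_ZK K hr.le (I₀ * J)
  rw [h0.sigmaK_mul hr.le hJ hdisj] at hJZ
  have hδ : 0 < (y₀:ℝ) ^ (-r) := by positivity
  refine ⟨sigmaK K r I₀, sigmaK K r I₀ * sigmaK K r J, by linarith,
    sigmaK_mono K hr.le (dvd_mul_right _ _), ?_, ?_, hJZ, ?_⟩
  · rw [h0.sigmaK_mul hr.le h1 hdisj]; gcongr
  · nlinarith
  · rw [← closure_Ico (by nlinarith)]
    refine closure_minimal ?_ isClosed_closure
    intro t ht
    exact mem_closure_sigma hr hbig h0 hJ ht.1 ht.2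

end partF


theorem sep_components {ι V : Type*} (f : ι → ℝ) (S : Set ι) (v : ι → V) (δ : ℝ) (hδ : 0 < δ)
    (h : ∀ i ∈ S, ∀ j ∈ S, |f i - f j| < δ → v i = v j) :
    ∃ L : ConnectedComponents ↥(closure (f '' S)) → V, ∀ i (hi : i ∈ S),
      L (ConnectedComponents.mk ⟨f i, subset_closure ⟨i, hi, rfl⟩⟩) = v i := by
  classical
  have hex : ∀ x : ↥(closure (f '' S)), ∃ i ∈ S, |f i - x.1| < δ / 4 := by
    intro x
    obtain ⟨_, ⟨i, hi, rfl⟩, hd⟩ := Metric.mem_closure_iff.mp x.2 (δ/4) (by positivity)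
    refine ⟨i, hi, ?_⟩
    rwa [dist_comm, Real.dist_eq] at hd
  choose c hcS hc using hex
  let g : ↥(closure (f '' S)) → V := fun x => v (c x)
  have hg : IsLocallyConstant g := by
    rw [IsLocallyConstant.iff_eventually_eq]
    intro x
    filter_upwards [Metric.ball_mem_nhds x (show 0 < δ/4 by positivity)] with z hz
    apply h _ (hcS z) _ (hcS x)
    have h1 := abs_lt.mp (hc z)
    have h2 := abs_lt.mp (hc x)
    rw [Metric.mem_ball, Subtype.dist_eq, Real.dist_eq] at hz
    have h3 := abs_lt.mp hz
    rw [abs_lt]; constructor <;> linarith [h1.1, h1.2, h2.1, h2.2, h3.1, h3.2]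
  let _ : TopologicalSpace V := ⊥
  have : DiscreteTopology V := ⟨rfl⟩
  have hgc : Continuous g := hg.continuous
  refine ⟨hgc.connectedComponentsLift, fun i hi => ?_⟩
  rw [hgc.connectedComponentsLift_apply_coe]
  apply h _ (hcS _) _ hi
  have := hc ⟨f i, subset_closure ⟨i, hi, rfl⟩⟩
  linarith

section partG
variable (K : Type*) [Field K] [NumberField K]

/-- number of divisors of norm `m` -/
noncomputable def aK (I : Ideal (𝓞 K)) (m : ℕ) : ℕ :=
  {D : Ideal (𝓞 K) | D ∣ I ∧ Ideal.absNorm D = m}.ncard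

/-- tail of the divisor sum -/
noncomputable def tailK (r : ℝ) (I : Ideal (𝓞 K)) (k : ℕ) : ℝ :=
  ∑' D, Set.indicator {D : Ideal (𝓞 K) | D ∣ I ∧ k < Ideal.absNorm D} (nf K r) D

theorem finite_norm_eq (I : Ideal (𝓞 K)) (m : ℕ) :
    {D : Ideal (𝓞 K) | D ∣ I ∧ Ideal.absNorm D = m}.Finite :=
  (Ideal.finite_setOfPred_absNorm_le m).subset (fun _ hP => hP.2.le)

theorem tailK_nonneg (r : ℝ) (I : Ideal (𝓞 K)) (k : ℕ) : 0 ≤ tailK K r I k :=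
  tsum_nonneg (fun _ => ind_nonneg K r _ _)

theorem tailK_le {r : ℝ} (hr : 3 ≤ r) (I : Ideal (𝓞 K)) (k : ℕ) :
    tailK K r I k ≤ ((k + 1 : ℕ) : ℝ) ^ (3 - r) * ZK K := by
  refine le_trans ?_ (tail_le K hr k)
  refine (summable_ind K hr _).tsum_le_tsum ?_ (summable_ind K hr _)
  intro J
  exact Set.indicator_le_indicator_of_subset (fun x hx => hx.2) (nf_nonneg K r) J

theorem tailK_succ {r : ℝ} (hr : 3 ≤ r) (I : Ideal (𝓞 K)) (k : ℕ) :
    tailK K r I k = (aK K I (k+1)) * ((k + 1 : ℕ) : ℝ) ^ (-r) + tailK K r I (k+1) := by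
  classical
  have hfin := finite_norm_eq K I (k+1)
  have h1 : ∑' D, Set.indicator {D : Ideal (𝓞 K) | D ∣ I ∧ Ideal.absNorm D = k+1} (nf K r) D
      = (aK K I (k+1)) * ((k + 1 : ℕ) : ℝ) ^ (-r) := by
    rw [tsum_eq_sum (s := hfin.toFinset)]
    · rw [Finset.sum_congr rfl (g := fun _ => ((k + 1 : ℕ) : ℝ) ^ (-r))]
      · rw [Finset.sum_const, nsmul_eq_mul, aK, Set.ncard_eq_toFinset_card _ hfin]
      · intro D hD
        have hD' := hfin.mem_toFinset.mp hD
        rw [Set.indicator_of_mem hD', nf, hD'.2]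
    · intro D hD
      rw [Set.indicator_of_notMem]
      intro h; exact hD (hfin.mem_toFinset.mpr h)
  rw [← h1, tailK, tailK, ← (summable_ind K hr _).tsum_add (summable_ind K hr _)]
  apply tsum_congr
  intro D
  have hdisj : Disjoint {D : Ideal (𝓞 K) | D ∣ I ∧ Ideal.absNorm D = k+1}
      {D : Ideal (𝓞 K) | D ∣ I ∧ k + 1 < Ideal.absNorm D} := by
    rw [Set.disjoint_left]
    rintro D ⟨_, h1⟩ ⟨_, h2⟩
    omega
  have hset : {D : Ideal (𝓞 K) | D ∣ I ∧ k < Ideal.absNorm D} =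
      {D : Ideal (𝓞 K) | D ∣ I ∧ Ideal.absNorm D = k+1} ∪
        {D : Ideal (𝓞 K) | D ∣ I ∧ k + 1 < Ideal.absNorm D} := by
    ext D
    constructor
    · rintro ⟨h1, h2⟩
      rcases Nat.lt_or_ge (k+1) (Ideal.absNorm D) with h | h
      · right; exact ⟨h1, h⟩
      · left; exact ⟨h1, by omega⟩
    · rintro (⟨h1, h2⟩ | ⟨h1, h2⟩)
      · exact ⟨h1, by omega⟩
      · exact ⟨h1, by omega⟩
  rw [hset, Set.indicator_union_of_disjoint hdisj]

theorem sigmaK_split {r : ℝ} (hr : 3 ≤ r) {I : Ideal (𝓞 K)} (hI : I ≠ 0) (k : ℕ) :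
    sigmaK K r I = ∑ m ∈ Finset.range k, (aK K I (m+1)) * ((m + 1 : ℕ) : ℝ) ^ (-r)
      + tailK K r I k := by
  induction k with
  | zero =>
    rw [Finset.sum_range_zero, zero_add, sigmaK_eq, tailK]
    have hset : {D : Ideal (𝓞 K) | D ∣ I} =
        {D : Ideal (𝓞 K) | D ∣ I ∧ 0 < Ideal.absNorm D} := by
     ext D
     constructor
     · intro h
       refine ⟨h, ?_⟩
       rw [Nat.pos_iff_ne_zero]
       simpa [Ideal.absNorm_eq_zero_iff] using ne_zero_of_dvd_ne_zero hI h
     · intro h; exact h.1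
    rw [hset]
  | succ k ih =>
    rw [Finset.sum_range_succ, ih, tailK_succ K hr]; ring

/-- truncated counting vector -/
noncomputable def vK (n : ℕ) (I : Ideal (𝓞 K)) : ℕ → ℕ :=
  fun m => if m < n then aK K I (m+1) else 0

theorem vK_sep {r : ℝ} (hr : 3 ≤ r) (n : ℕ) (hn : ∀ k : ℕ, 1 ≤ k → k ≤ n →
      ((k + 1 : ℕ) : ℝ) ^ (3 - r) * ZK K ≤ (k:ℝ) ^ (-r) / 2)
    {I J : Ideal (𝓞 K)} (hI : I ≠ 0) (hJ : J ≠ 0)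
    (hIJ : |sigmaK K r I - sigmaK K r J| < (n:ℝ) ^ (-r) / 2) : vK K n I = vK K n J := by
  classical
  by_contra hne
  have hex : ∃ m, vK K n I m ≠ vK K n J m := by
    by_contra h; push Not at h; exact hne (funext h)
  have hspec := Nat.find_spec hex
  have hmin := fun m => Nat.find_min hex (m := m)
  generalize Nat.find hex = k at *
  have hkn : k < n := by
    by_contra h
    simp [vK, h] at hspec
  simp only [vK, hkn, if_true] at hspec
  have hmin' : ∀ m < k, aK K I (m+1) = aK K J (m+1) := by
    intro m hm
    have := hmin m hm
    simp only [vK, (by omega : m < n), if_true, not_not] at this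
    exact this
  have e1 := sigmaK_split K hr hI (k+1)
  have e2 := sigmaK_split K hr hJ (k+1)
  rw [Finset.sum_range_succ] at e1 e2
  rw [Finset.sum_congr rfl (fun m hm => by rw [hmin' m (Finset.mem_range.mp hm)])] at e1
  have t1 := tailK_le K hr I (k+1)
  have t2 := tailK_le K hr J (k+1)
  have t3 := tailK_nonneg K r I (k+1)
  have t4 := tailK_nonneg K r J (k+1)
  have h5 := hn (k+1) (by omega) (by omega)
  have hk0 : (0:ℝ) < ((k+1 : ℕ) : ℝ) := by positivity
  have h6 : (n:ℝ) ^ (-r) ≤ ((k+1 : ℕ) : ℝ) ^ (-r) := by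
    apply Real.rpow_le_rpow_of_nonpos hk0
    · exact_mod_cast hkn
    · linarith
  set w := ((k+1 : ℕ) : ℝ) ^ (-r)
  have hw : 0 ≤ w := by positivity
  have habs := abs_lt.mp hIJ
  rcases Nat.lt_or_gt_of_ne hspec with h | h
  · have : ((aK K I (k+1) : ℝ) + 1) * w ≤ aK K J (k+1) * w := by
      gcongr; exact_mod_cast h
    linarith [habs.1]
  · have : ((aK K J (k+1) : ℝ) + 1) * w ≤ aK K I (k+1) * w := by
      gcongr; exact_mod_cast h
    linarith [habs.2]

theorem aK_gprod {A : Finset ℕ} (hA : ∀ p ∈ A, IsGood K p) {p : ℕ} (hp : IsGood K p) :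
    aK K (gprod K A) p ≠ 0 ↔ p ∈ A := by
  rw [aK, ← Nat.pos_iff_ne_zero, Set.ncard_pos (finite_norm_eq K _ _)]
  constructor
  · rintro ⟨D, hD, hDp⟩
    have hD0 : D ≠ 0 := ne_zero_of_dvd_ne_zero (gprod_ne_zero K hA) hD
    have hD1 : ¬ IsUnit D := by
      rw [Ideal.isUnit_iff]
      rintro rfl
      rw [Ideal.absNorm_top] at hDp
      exact hp.1.one_lt.ne hDp
    obtain ⟨Q, hQ, hQD⟩ := WfDvdMonoid.exists_irreducible_factor hD1 hD0
    obtain ⟨q, hq, rfl⟩ := dvd_gprod K hA hQ.prime (hQD.trans hD)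
    have h1 : Ideal.absNorm (gp K q) ∣ Ideal.absNorm D := map_dvd _ hQD
    rw [gp_norm K (hA q hq), hDp] at h1
    rwa [← (Nat.prime_dvd_prime_iff_eq (hA q hq).1 hp.1).mp h1]
  · intro h
    exact ⟨gp K p, Finset.dvd_prod_of_mem _ h, gp_norm K hp⟩

theorem card_components_ge {r : ℝ} (hr : 3 < r) (n : ℕ) (hn1 : 1 ≤ n) (hn : ∀ k : ℕ, 1 ≤ k → k ≤ n →
      ((k + 1 : ℕ) : ℝ) ^ (3 - r) * ZK K ≤ (k:ℝ) ^ (-r) / 2)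
    (G : Finset ℕ) (hG : ∀ p ∈ G, p ≤ n ∧ IsGood K p) :
    2 ^ G.card ≤ Nat.card (ConnectedComponents
      ↥(closure (sigmaK K r '' {I : Ideal (𝓞 K) | I ≠ 0}))) := by
  classical
  have hfin := finite_components K hr
  have hnR : (0:ℝ) < n := by exact_mod_cast hn1
  obtain ⟨L, hL⟩ := sep_components (sigmaK K r) {I : Ideal (𝓞 K) | I ≠ 0} (vK K n)
    ((n:ℝ) ^ (-r) / 2) (by positivity) (fun I hI J hJ h => vK_sep K hr.le n hn hI hJ h)
  have hgood : ∀ A : G.powerset, ∀ p ∈ A.1, IsGood K p := fun A p hp =>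
    (hG p (Finset.mem_powerset.mp A.2 hp)).2
  have hne : ∀ A : G.powerset, gprod K A.1 ∈ {I : Ideal (𝓞 K) | I ≠ 0} := fun A =>
    gprod_ne_zero K (hgood A)
  rw [← Finset.card_powerset, ← Nat.card_eq_finsetCard]
  refine Nat.card_le_card_of_injective (fun A : G.powerset =>
    ConnectedComponents.mk ⟨sigmaK K r (gprod K A.1), subset_closure ⟨_, hne A, rfl⟩⟩) ?_
  intro A B hAB
  have h1 : vK K n (gprod K A.1) = vK K n (gprod K B.1) := by
    rw [← hL _ (hne A), ← hL _ (hne B)]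
    exact congrArg L hAB
  have h2 : ∀ p ∈ G, (p ∈ A.1 ↔ p ∈ B.1) := by
    intro p hp
    obtain ⟨hpn, hpg⟩ := hG p hp
    have hp1 := hpg.1.one_lt
    rw [← aK_gprod K (hgood A) hpg, ← aK_gprod K (hgood B) hpg]
    have h3 := congrFun h1 (p - 1)
    simp only [vK, (by omega : p - 1 < n), if_true, (by omega : p - 1 + 1 = p)] at h3
    rw [h3]
  apply Subtype.ext
  ext p
  constructor
  · intro h; exact (h2 p (Finset.mem_powerset.mp A.2 h)).1 h
  · intro h; exact (h2 p (Finset.mem_powerset.mp B.2 h)).2 h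

theorem tail_small (Z : ℝ) (hZ : 0 < Z) (ε : ℝ) (hε : 0 < ε) :
    ∀ᶠ r : ℝ in Filter.atTop, ∀ k : ℕ, 1 ≤ k → (k:ℝ) ≤ r ^ (1 / (1 + ε)) →
      ((k + 1 : ℕ) : ℝ) ^ (3 - r) * Z ≤ (k:ℝ) ^ (-r) / 2 := by
  set β := ε / (1 + ε) with hβ
  have hβ0 : 0 < β := by positivity
  have h1 := (isLittleO_rpow_exp_pos_mul_atTop (3 / β) (show (0:ℝ) < 1/2 by norm_num)).bound
    (show (0:ℝ) < 1 / (16 * Z) by positivity)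
  have h2 := (tendsto_rpow_atTop hβ0).eventually h1
  filter_upwards [h2, Filter.eventually_ge_atTop 3] with r hr hr3 k hk1 hkY
  have hr0 : 0 < r := by linarith
  set Y := r ^ (1 / (1 + ε)) with hY
  have hYr : Y ≤ r := by
    calc Y ≤ r ^ (1:ℝ) := by
          apply Real.rpow_le_rpow_of_exponent_le (by linarith)
          rw [div_le_one (by positivity)]; linarith
      _ = r := Real.rpow_one r
  have hY0 : 0 < Y := by positivity
  have hk : (1:ℝ) ≤ k := by exact_mod_cast hk1
  have hYβ : r / Y = r ^ β := by
    rw [div_eq_iff hY0.ne', hY, ← Real.rpow_add hr0]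
    have : β + 1 / (1 + ε) = 1 := by rw [hβ]; field_simp; ring
    rw [this, Real.rpow_one]
  rw [← Real.rpow_mul hr0.le, mul_div_cancel₀ _ hβ0.ne', Real.norm_of_nonneg (by positivity),
    Real.norm_of_nonneg (by positivity)] at hr
  have hr' : 16 * Z * r ^ (3:ℝ) ≤ Real.exp (1/2 * r ^ β) := by
    have h16 : (0:ℝ) < 16 * Z := by positivity
    calc 16 * Z * r ^ (3:ℝ) ≤ 16 * Z * (1 / (16 * Z) * Real.exp (1/2 * r ^ β)) := by gcongr
      _ = _ := by field_simp
  have hk1' : (0:ℝ) < (k:ℝ) + 1 := by positivity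
  have hk0 : (0:ℝ) < k := by linarith
  push_cast
  -- key lower bound
  have hkey : Real.exp (1/2 * r ^ β) ≤ (((k:ℝ)+1) / k) ^ r := by
    rw [Real.rpow_def_of_pos (show 0 < ((k:ℝ)+1)/k by positivity)]
    apply Real.exp_le_exp.mpr
    have hl := Real.one_sub_inv_le_log_of_pos (show 0 < ((k:ℝ)+1)/k by positivity)
    have e1 : 1 - (((k:ℝ)+1)/k)⁻¹ = 1 / (k+1) := by field_simp; ring
    rw [e1] at hl
    have e2 : 1 / (2 * Y) ≤ 1 / ((k:ℝ)+1) := by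
      apply one_div_le_one_div_of_le hk1'
      linarith
    rw [← hYβ]
    calc 1/2 * (r / Y) = 1 / (2 * Y) * r := by field_simp
      _ ≤ Real.log (((k:ℝ)+1)/k) * r := by
        gcongr; linarith
  have hcube : 2 * Z * ((k:ℝ)+1) ^ (3:ℝ) ≤ 16 * Z * r ^ (3:ℝ) := by
    have : ((k:ℝ)+1) ^ (3:ℝ) ≤ (2 * r) ^ (3:ℝ) := by
      apply Real.rpow_le_rpow hk1'.le _ (by norm_num)
      linarith
    rw [Real.mul_rpow (by norm_num) hr0.le] at this
    have e8 : (2:ℝ) ^ (3:ℝ) = 8 := by norm_num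
    rw [e8] at this
    nlinarith
  have hfin := hcube.trans (hr'.trans hkey)
  rw [Real.div_rpow hk1'.le hk0.le] at hfin
  rw [Real.rpow_sub hk1', Real.rpow_neg hk0.le]
  have p1 : 0 < ((k:ℝ)+1) ^ r := by positivity
  have p2 : 0 < (k:ℝ) ^ r := by positivity
  rw [le_div_iff₀ p2] at hfin
  rw [inv_eq_one_div, div_div, div_mul_eq_mul_div, div_le_div_iff₀ p1 (by positivity)]
  linarith

end partG

theorem stmt4 (K : Type*) [Field K] [NumberField K] [IsGalois ℚ K]
    (ε : ℝ) (hε : 0 < ε) :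
    ∃ μ r₀ : ℝ, 0 < μ ∧ 0 < r₀ ∧ ∀ r : ℝ, r₀ < r →
      μ * (r ^ (1 / (1 + ε)) / Real.log r) <
        Real.log (Nat.card (ConnectedComponents
          ↥(closure (sigmaK K r '' {I : Ideal (𝓞 K) | I ≠ 0})))) := by
  obtain ⟨H, x₀, c, hH, hc, hx₀, hcount⟩ := goodPrimes_count K
  have hα : 0 < 1 / (1 + ε) := by positivity
  have hHR : (1:ℝ) ≤ H := by exact_mod_cast hH
  have hlog2 : 0 < Real.log 2 := Real.log_pos one_lt_two
  have hev := (tail_small (ZK K) (ZK_pos K) ε hε).and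
    ((tendsto_rpow_atTop hα).eventually_ge_atTop (4 * H * x₀))
  obtain ⟨r₁, hr₁⟩ := Filter.eventually_atTop.mp hev
  refine ⟨Real.log 2 * c / (4 * H), max r₁ 4, by positivity, by positivity, fun r hr => ?_⟩
  obtain ⟨htail, hY4⟩ := hr₁ r (le_trans (le_max_left _ _) hr.le)
  have hr4 : 4 < r := lt_of_le_of_lt (le_max_right _ _) hr
  set Y := r ^ (1 / (1 + ε)) with hY
  have hY0 : 0 < Y := by positivity
  have hYr : Y ≤ r := by
    calc Y ≤ r ^ (1:ℝ) := by
          apply Real.rpow_le_rpow_of_exponent_le (by linarith)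
          rw [div_le_one (by positivity)]; linarith
      _ = r := Real.rpow_one r
  have hx₀R : (2:ℝ) ≤ x₀ := by exact_mod_cast hx₀
  set x := ⌊Y / H⌋₊ with hx
  have hxle : (x:ℝ) ≤ Y / H := Nat.floor_le (by positivity)
  have hxgt : Y / H < x + 1 := Nat.lt_floor_add_one _
  have hYH : 4 * (x₀:ℝ) ≤ Y / H := by
    rw [le_div_iff₀ (by linarith)]; linarith
  have hxhalf : Y / (2 * H) ≤ x := by
    have : Y / (2 * H) = Y / H / 2 := by rw [div_div]; ring
    rw [this]; linarith
  have hxx₀ : x₀ ≤ x := by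
    have : (x₀:ℝ) ≤ x := by linarith
    exact_mod_cast this
  have hHx : (H * x : ℕ) ≤ ⌊Y⌋₊ := by
    apply Nat.le_floor
    push_cast
    rw [le_div_iff₀ (by linarith)] at hxle
    linarith
  have hn1 : 1 ≤ ⌊Y⌋₊ := by
    refine le_trans ?_ hHx
    exact Nat.mul_pos hH (by omega)
  have hcard := card_components_ge K (by linarith : 3 < r) ⌊Y⌋₊ hn1
    (fun k hk1 hk2 => htail k hk1 (by
      calc (k:ℝ) ≤ (⌊Y⌋₊ : ℝ) := by exact_mod_cast hk2
        _ ≤ Y := Nat.floor_le hY0.le)) (goodPrimes K x (H * x))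
    (fun p hp => by
      have := (mem_goodPrimes K).1 hp
      exact ⟨this.1.2.trans hHx, this.2⟩)
  have hc1 := hcount x hxx₀
  set m := (goodPrimes K x (H * x)).card
  set N := Nat.card (ConnectedComponents
          ↥(closure (sigmaK K r '' {I : Ideal (𝓞 K) | I ≠ 0})))
  have hlogN : (m:ℝ) * Real.log 2 ≤ Real.log N := by
    rw [← Real.log_pow]
    apply Real.log_le_log (by positivity)
    exact_mod_cast hcard
  refine lt_of_lt_of_le ?_ hlogN
  have hx2 : (2:ℝ) ≤ x := by
    have : (x₀:ℝ) ≤ x := by exact_mod_cast hxx₀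
    linarith
  have hlogx : 0 < Real.log x := Real.log_pos (by linarith)
  have hlogr : Real.log x ≤ Real.log r := by
    apply Real.log_le_log (by linarith)
    have : Y / H ≤ Y := div_le_self hY0.le hHR
    linarith
  have hlogr0 : 0 < Real.log r := by linarith
  have hA : Y / (2 * H) / Real.log r ≤ x / Real.log x := by
    gcongr
  have hpos : 0 < Real.log 2 * c * (Y / (2 * H) / Real.log r) := by positivity
  calc Real.log 2 * c / (4 * H) * (Y / Real.log r)
      = Real.log 2 * c * (Y / (2 * H) / Real.log r) / 2 := by field_simp; ring
    _ < Real.log 2 * c * (Y / (2 * H) / Real.log r) := by linarith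
    _ ≤ Real.log 2 * c * (x / Real.log x) := by gcongr
    _ = (c * (x / Real.log x)) * Real.log 2 := by ring
    _ ≤ m * Real.log 2 := by gcongr
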